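/- arXiv:2002.06164 — 2 statements merged into one kernel-verified Lean document; each statement's English description precedes it below -/
import Mathlib

section
/- Let M = M₁ ⊕ M₂ be a rank-k matroid on [n] with two connected components with ground sets S and T = [n] \ S. Suppose {S, T} is a crossing partition, i.e. there exist a < b < c < d in cyclic order with a, c ∈ S and b, d ∈ T. Then the matroid polytope Γ_M has a two-dimensional face which is a square with vertex set {e_{Rab}, e_{Rad}, e_{Rbc}, e_{Rcd}} for some (k−2)-element set R ⊆ [n] disjoint from {a,b,c,d}; in particular this face is not a positroid polytope. -/
open scoped BigOperators

/-- The indicator vector `e_B ∈ ℝⁿ` of a subset `B ⊆ [n]`. -/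
noncomputable def ind (n : ℕ) (B : Finset (Fin n)) : Fin n → ℝ :=
  fun i => if i ∈ B then 1 else 0

/-- The polytope `conv{e_B : B ∈ 𝓑} ⊆ ℝⁿ`. -/
noncomputable def polytopeOf (n : ℕ) (𝓑 : Finset (Finset (Fin n))) : Set (Fin n → ℝ) :=
  convexHull ℝ (ind n '' ↑𝓑)

/-- `F` is a face of `P`: the set of maximizers in `P` of some linear functional. -/
def IsFaceOf (n : ℕ) (P F : Set (Fin n → ℝ)) : Prop :=
  ∃ w : Fin n → ℝ, F = {x ∈ P | ∀ y ∈ P, ∑ i, w i * y i ≤ ∑ i, w i * x i}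

/-- The basis exchange axiom. -/
def ExchangeAxiom (n : ℕ) (𝓑 : Finset (Finset (Fin n))) : Prop :=
  ∀ B₁ ∈ 𝓑, ∀ B₂ ∈ 𝓑, ∀ x ∈ B₁ \ B₂, ∃ y ∈ B₂ \ B₁, insert y (B₁.erase x) ∈ 𝓑

/-- Exchange relation whose equivalence classes are the connected components. -/
def exchRel (n : ℕ) (𝓑 : Finset (Finset (Fin n))) (a b : Fin n) : Prop :=
  a = b ∨ ∃ B₁ ∈ 𝓑, ∃ B₂ ∈ 𝓑, a ∈ B₁ ∧ b ∉ B₁ ∧ B₂ = insert b (B₁.erase a)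

/-- The maximal minor of a `k × n` matrix with column set `I` (zero if `|I| ≠ k`). -/
noncomputable def minor (k n : ℕ) (A : Matrix (Fin k) (Fin n) ℝ) (I : Finset (Fin n)) : ℝ :=
  if h : I.card = k then (A.submatrix id fun j : Fin k => ((I.orderIsoOfFin h j : I) : Fin n)).det
  else 0

/-- `𝓑` is the set of bases of a positroid of rank `k` on `[n]`: it is realizable
by a real `k × n` matrix of rank `k` all of whose maximal minors are nonnegative. -/
def IsPositroid (n k : ℕ) (𝓑 : Set (Finset (Fin n))) : Prop :=
  ∃ A : Matrix (Fin k) (Fin n) ℝ, A.rank = k ∧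
    (∀ I : Finset (Fin n), 0 ≤ minor k n A I) ∧
    (∀ I : Finset (Fin n), I.card = k → (I ∈ 𝓑 ↔ minor k n A I ≠ 0))

/-- Sorting the columns indexed by `insert x R` moves `x` past the elements of `R` below it. -/
theorem alternating_orderEmbOfFin_insert {V : Type*} [AddCommGroup V] [Module ℝ V] {n m : ℕ}
    (g : V [⋀^Fin (m + 1)]→ₗ[ℝ] ℝ) (col : Fin n → V) (R : Finset (Fin n)) (x : Fin n)
    (hR : R.card = m) (h : (insert x R).card = m + 1) :
    g (col ∘ (insert x R).orderEmbOfFin h) =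
      (-1) ^ (R.filter (· < x)).card * g (Matrix.vecCons (col x) (col ∘ R.orderEmbOfFin hR)) := by
  set s := (insert x R).orderEmbOfFin h with hs
  obtain ⟨p, hp⟩ : ∃ p, s p = x := by
    have : x ∈ Set.range s := by simp [hs]
    exact this
  have hrem : p.removeNth s = R.orderEmbOfFin hR := by
    apply Finset.orderEmbOfFin_unique
    · intro j
      have h1 : s (p.succAbove j) ∈ insert x R := Finset.orderEmbOfFin_mem _ _ _
      have h2 : s (p.succAbove j) ≠ x := by
        rw [← hp]
        exact fun h => Fin.succAbove_ne p j (s.injective h)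
      exact (Finset.mem_insert.1 h1).resolve_left h2
    · exact s.strictMono.comp (Fin.strictMono_succAbove p)
  have hcard : (R.filter (· < x)).card = p := by
    have : R.filter (· < x) = (Finset.Iio p).map s.toEmbedding := by
      ext y
      simp only [Finset.mem_filter, Finset.mem_map, Finset.mem_Iio, RelEmbedding.coe_toEmbedding]
      constructor
      · rintro ⟨hy, hyx⟩
        have : y ∈ Set.range s := by simp [hs, hy]
        obtain ⟨i, rfl⟩ := this
        exact ⟨i, s.lt_iff_lt.1 (hyx.trans_eq hp.symm), rfl⟩
      · rintro ⟨i, hi, rfl⟩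
        have hlt : s i < x := (s.lt_iff_lt.2 hi).trans_eq hp
        have hmem : s i ∈ insert x R := Finset.orderEmbOfFin_mem _ _ _
        exact ⟨(Finset.mem_insert.1 hmem).resolve_left hlt.ne, hlt⟩
    rw [this, Finset.card_map, Fin.card_Iio]
  have hcons : Matrix.vecCons (col x) (col ∘ R.orderEmbOfFin hR)
      = (col ∘ s) ∘ p.cycleRange.symm := by
    rw [Function.comp_assoc, ← Fin.cons_removeNth_eq_comp_cycleRange_symm, hrem, hp]
    ext j
    refine Fin.cases ?_ (fun i => ?_) j <;> simp
  rw [hcons, AlternatingMap.map_perm, Equiv.Perm.sign_symm, Fin.sign_cycleRange, hcard,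
    Units.smul_def, zsmul_eq_mul]
  push_cast
  rw [← mul_assoc, ← mul_pow]
  simp

/-- Sorting the columns indexed by `R ∪ {x, y}` with `x < y`: the sign is a product of a
contribution of `x` and one of `y`. -/
theorem minor_insert_insert {n m : ℕ} (A : Matrix (Fin (m + 2)) (Fin n) ℝ) (R : Finset (Fin n))
    (hR : R.card = m) {x y : Fin n} (hxy : x < y) (hx : x ∉ R) (hy : y ∉ R) :
    minor (m + 2) n A (insert x (insert y R)) =
      (-1) ^ (R.filter (· < x)).card * ((-1) ^ (R.filter (· < y)).card *
        (Matrix.detRowAlternating (R := ℝ)) (Matrix.vecCons (A.transpose x)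
          (Matrix.vecCons (A.transpose y) (A.transpose ∘ R.orderEmbOfFin hR)))) := by
  have hy' : (insert y R).card = m + 1 := by rw [Finset.card_insert_of_notMem hy, hR]
  have hx' : x ∉ insert y R := by simp [hx, hxy.ne]
  have hc : (insert x (insert y R)).card = m + 2 := by
    rw [Finset.card_insert_of_notMem hx', hy']
  have hfil : (insert y R).filter (· < x) = R.filter (· < x) := by
    rw [Finset.filter_insert, if_neg hxy.not_gt]
  have h1 := alternating_orderEmbOfFin_insert (Matrix.detRowAlternating (R := ℝ)) A.transpose
    (insert y R) x hy' hc
  have h2 := alternating_orderEmbOfFin_insert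
    ((Matrix.detRowAlternating (R := ℝ)).curryLeft (A.transpose x)) A.transpose R y hR hy'
  rw [AlternatingMap.curryLeft_apply_apply, AlternatingMap.curryLeft_apply_apply] at h2
  rw [hfil, h2] at h1
  rw [← h1, minor, dif_pos hc, ← Matrix.det_transpose]
  rfl

/-- The three-term Grassmann–Plücker relation in the case where one of the products vanishes. -/
theorem det_plucker_of_eq_zero {m : ℕ} (r : Fin m → Fin (m + 2) → ℝ)
    (a b c d : Fin (m + 2) → ℝ)
    (hab : Matrix.detRowAlternating (R := ℝ) (Matrix.vecCons a (Matrix.vecCons b r)) ≠ 0)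
    (hac : Matrix.detRowAlternating (R := ℝ) (Matrix.vecCons a (Matrix.vecCons c r)) = 0) :
    Matrix.detRowAlternating (R := ℝ) (Matrix.vecCons a (Matrix.vecCons b r)) *
        Matrix.detRowAlternating (R := ℝ) (Matrix.vecCons c (Matrix.vecCons d r)) =
      -(Matrix.detRowAlternating (R := ℝ) (Matrix.vecCons b (Matrix.vecCons c r)) *
        Matrix.detRowAlternating (R := ℝ) (Matrix.vecCons a (Matrix.vecCons d r))) := by
  set D := Matrix.detRowAlternating (R := ℝ) (n := Fin (m + 2)) with hD
  have hli : IsUnit (Matrix.of (Matrix.vecCons a (Matrix.vecCons b r))) :=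
    (Matrix.isUnit_iff_isUnit_det _).2 (isUnit_iff_ne_zero.2 hab)
  obtain ⟨z, hz⟩ := (Matrix.vecMul_surjective_iff_isUnit.2 hli) c
  have hc : c = z 0 • a + (z 1 • b + ∑ i : Fin m, z i.succ.succ • r i) := by
    rw [← hz]
    beta_reduce
    rw [Matrix.vecMul_eq_sum, Fin.sum_univ_succ, Fin.sum_univ_succ]
    rfl
  have hleft (y : Fin (m + 2) → ℝ) : D (Matrix.vecCons c (Matrix.vecCons y r)) =
      z 0 * D (Matrix.vecCons a (Matrix.vecCons y r)) +
        z 1 * D (Matrix.vecCons b (Matrix.vecCons y r)) := by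
    have hr (i : Fin m) : D (Matrix.vecCons (r i) (Matrix.vecCons y r)) = 0 :=
      D.map_eq_zero_of_eq (i := 0) (j := i.succ.succ) _ (by simp) (Fin.succ_ne_zero _).symm
    let L : (Fin (m + 2) → ℝ) →ₗ[ℝ] ℝ :=
      { toFun := fun u => D.curryLeft u (Matrix.vecCons y r)
        map_add' := by simp
        map_smul' := by simp }
    have hL (u : Fin (m + 2) → ℝ) : D (Matrix.vecCons u (Matrix.vecCons y r)) = L u := rfl
    simp only [hL] at hr ⊢
    rw [hc]
    simp [hr]
  have hswap (x y : Fin (m + 2) → ℝ) : D (Matrix.vecCons x (Matrix.vecCons y r)) =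
      -D (Matrix.vecCons y (Matrix.vecCons x r)) := by
    rw [← D.map_swap (i := 0) (j := 1) _ (by simp)]
    congr 1
    ext j : 1
    refine Fin.cases ?_ (fun j => Fin.cases ?_ (fun i => ?_) j) j
    · simp
    · simp
    · rw [Function.comp_apply, Equiv.swap_apply_of_ne_of_ne (Fin.succ_ne_zero _)
        (Fin.succ_succ_ne_one _)]
      simp
  have hself (x : Fin (m + 2) → ℝ) : D (Matrix.vecCons x (Matrix.vecCons x r)) = 0 := by
    have := hswap x x
    linarith
  have h1 := hleft a
  rw [hswap c a, hac, hself a, hswap b a] at h1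
  have hz1 : z 1 = 0 := by
    have : z 1 * D (Matrix.vecCons a (Matrix.vecCons b r)) = 0 := by linarith
    exact (mul_eq_zero.1 this).resolve_right hab
  rw [hswap b c, hleft b, hleft d, hz1]
  ring

/-- The matroid with bases `Rab, Rad, Rbc, Rcd` is not a positroid when `a < b < c < d`. -/
theorem not_isPositroid_crossing_square {n : ℕ} (R : Finset (Fin n)) {a b c d : Fin n}
    (hab : a < b) (hbc : b < c) (hcd : c < d) (ha : a ∉ R) (hb : b ∉ R) (hc : c ∉ R)
    (hd : d ∉ R) :
    ¬ IsPositroid n (R.card + 2) ({insert a (insert b R), insert a (insert d R),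
      insert b (insert c R), insert c (insert d R)} : Set (Finset (Fin n))) := by
  rintro ⟨A, -, hnn, hiff⟩
  have hcard {x y : Fin n} (hxy : x < y) (hx : x ∉ R) (hy : y ∉ R) :
      (insert x (insert y R)).card = R.card + 2 := by
    rw [Finset.card_insert_of_notMem (by simp [hx, hxy.ne]), Finset.card_insert_of_notMem hy]
  have had := hab.trans (hbc.trans hcd)
  have pos {x y : Fin n} (hxy : x < y) (hx : x ∉ R) (hy : y ∉ R)
      (hmem : insert x (insert y R) ∈ ({insert a (insert b R), insert a (insert d R),
        insert b (insert c R), insert c (insert d R)} : Set (Finset (Fin n)))) :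
      0 < minor (R.card + 2) n A (insert x (insert y R)) :=
    (hnn _).lt_of_ne' ((hiff _ (hcard hxy hx hy)).1 hmem)
  have pab := pos hab ha hb (by simp)
  have pad := pos had ha hd (by simp)
  have pbc := pos hbc hb hc (by simp)
  have pcd := pos hcd hc hd (by simp)
  have pac : minor (R.card + 2) n A (insert a (insert c R)) = 0 := by
    by_contra hne
    have hmem := (hiff _ (hcard (hab.trans hbc) ha hc)).2 hne
    have hb' : b ∉ insert a (insert c R) := by simp [hb, hab.ne', hbc.ne]
    have hd' : d ∉ insert a (insert c R) := by simp [hd, had.ne', hcd.ne']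
    rcases hmem with h | h | h | h <;> rw [h] at hb' hd' <;> simp at hb' hd'
  rw [minor_insert_insert A R rfl hab ha hb] at pab
  rw [minor_insert_insert A R rfl had ha hd] at pad
  rw [minor_insert_insert A R rfl hbc hb hc] at pbc
  rw [minor_insert_insert A R rfl hcd hc hd] at pcd
  rw [minor_insert_insert A R rfl (hab.trans hbc) ha hc] at pac
  have hab0 := right_ne_zero_of_mul (right_ne_zero_of_mul pab.ne')
  have hac0 := ((mul_eq_zero.1 pac).resolve_left (by simp))
  replace hac0 := ((mul_eq_zero.1 hac0).resolve_left (by simp))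
  have key := det_plucker_of_eq_zero _ _ _ _ (A.transpose d) hab0 hac0
  have h1 := mul_pos pab pcd
  have h2 := mul_pos pbc pad
  generalize Matrix.detRowAlternating (R := ℝ) (Matrix.vecCons (A.transpose a)
    (Matrix.vecCons (A.transpose b) (A.transpose ∘ R.orderEmbOfFin rfl))) = Dab at *
  generalize Matrix.detRowAlternating (R := ℝ) (Matrix.vecCons (A.transpose c)
    (Matrix.vecCons (A.transpose d) (A.transpose ∘ R.orderEmbOfFin rfl))) = Dcd at *
  generalize Matrix.detRowAlternating (R := ℝ) (Matrix.vecCons (A.transpose b)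
    (Matrix.vecCons (A.transpose c) (A.transpose ∘ R.orderEmbOfFin rfl))) = Dbc at *
  generalize Matrix.detRowAlternating (R := ℝ) (Matrix.vecCons (A.transpose a)
    (Matrix.vecCons (A.transpose d) (A.transpose ∘ R.orderEmbOfFin rfl))) = Dad at *
  generalize ((-1 : ℝ) ^ (R.filter (· < a)).card) = ea at *
  generalize ((-1 : ℝ) ^ (R.filter (· < b)).card) = eb at *
  generalize ((-1 : ℝ) ^ (R.filter (· < c)).card) = ec at *
  generalize ((-1 : ℝ) ^ (R.filter (· < d)).card) = ed at *
  have h3 : ea * (eb * Dab) * (ec * (ed * Dcd)) = -(eb * (ec * Dbc) * (ea * (ed * Dad))) := by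
    linear_combination ea * eb * ec * ed * key
  linarith

/-- The maximizers of a linear functional on a polytope are the convex hull of the maximizing
generators. -/
theorem setOf_isMax_convexHull {E : Type*} [AddCommGroup E] [Module ℝ E] (f : E →ₗ[ℝ] ℝ) (M : ℝ)
    (V W : Set E) (hWV : W ⊆ V) (hW : W.Nonempty) (hfW : ∀ v ∈ W, f v = M)
    (hfV : ∀ v ∈ V, v ∉ W → f v < M) :
    convexHull ℝ W = {x ∈ convexHull ℝ V | ∀ y ∈ convexHull ℝ V, f y ≤ f x} := by
  have hle : convexHull ℝ V ⊆ {x | f x ≤ M} := by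
    refine convexHull_min (fun v hv => ?_) (convex_halfSpace_le f.isLinear M)
    by_cases hvW : v ∈ W
    · exact (hfW v hvW).le
    · exact (hfV v hv hvW).le
  have heq : convexHull ℝ W ⊆ {x | f x = M} :=
    convexHull_min hfW (convex_hyperplane f.isLinear M)
  have hdich : convexHull ℝ V ⊆ {x | f x < M ∨ x ∈ convexHull ℝ W} := by
    refine convexHull_min (fun v hv => ?_) (convex_iff_forall_pos.2 ?_)
    · by_cases hvW : v ∈ W
      · exact Or.inr (subset_convexHull ℝ W hvW)
      · exact Or.inl (hfV v hv hvW)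
    · intro x hx y hy s t hs ht hst
      have hM : M = s * M + t * M := by rw [← add_mul, hst, one_mul]
      have hfx : f x ≤ M := hx.elim le_of_lt fun h => (heq h).le
      have hfy : f y ≤ M := hy.elim le_of_lt fun h => (heq h).le
      simp only [Set.mem_ofPred_eq, map_add, map_smul, smul_eq_mul]
      rcases hx with hx | hx
      · left
        nlinarith [mul_lt_mul_of_pos_left hx hs, mul_le_mul_of_nonneg_left hfy ht.le]
      rcases hy with hy | hy
      · left
        nlinarith [mul_lt_mul_of_pos_left hy ht, mul_le_mul_of_nonneg_left hfx hs.le]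
      · exact Or.inr (convex_convexHull ℝ W hx hy hs.le ht.le hst)
  ext x
  constructor
  · intro hx
    refine ⟨convexHull_mono hWV hx, fun y hy => ?_⟩
    rw [heq hx]
    exact hle hy
  · rintro ⟨hxV, hmax⟩
    refine (hdich hxV).resolve_left (not_lt.2 ?_)
    obtain ⟨v, hv⟩ := hW
    rw [← hfW v hv]
    exact hmax v (subset_convexHull ℝ V (hWV hv))

/-- Among sets `B` of size `|R| + 1`, the weight `2|B ∩ R| + |B ∩ {a, c}|` is at most `2|R| + 1`,
with equality only for `Ra` and `Rc`. -/
theorem two_mul_card_inter_add_lt_or_eq {α : Type*} [DecidableEq α] (B R : Finset α) (a c : α)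
    (ha : a ∉ R) (hc : c ∉ R) (hB : B.card = R.card + 1) :
    2 * (B ∩ R).card + (B ∩ {a, c}).card < 2 * R.card + 1 ∨
      (2 * (B ∩ R).card + (B ∩ {a, c}).card = 2 * R.card + 1 ∧ (B = insert a R ∨ B = insert c R)) := by
  have hdis : Disjoint (B ∩ R) (B ∩ {a, c}) := by
    rw [Finset.disjoint_left]
    intro x hx hx'
    simp only [Finset.mem_inter, Finset.mem_insert, Finset.mem_singleton] at hx hx'
    rcases hx'.2 with rfl | rfl
    · exact ha hx.2
    · exact hc hx.2
  have hsum : (B ∩ R).card + (B ∩ {a, c}).card ≤ B.card := by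
    rw [← Finset.card_union_of_disjoint hdis]
    exact Finset.card_le_card
      (Finset.union_subset Finset.inter_subset_left Finset.inter_subset_left)
  have hle : (B ∩ R).card ≤ R.card := Finset.card_le_card Finset.inter_subset_right
  by_cases hlt : 2 * (B ∩ R).card + (B ∩ {a, c}).card < 2 * R.card + 1
  · exact Or.inl hlt
  right
  refine ⟨by omega, ?_⟩
  have hRB : R ⊆ B := by
    rw [← Finset.inter_eq_right]
    exact Finset.eq_of_subset_of_card_le Finset.inter_subset_right (by omega)
  obtain ⟨x, hx⟩ : (B ∩ {a, c}).Nonempty := by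
    rw [← Finset.card_pos]
    omega
  simp only [Finset.mem_inter, Finset.mem_insert, Finset.mem_singleton] at hx
  have hins {y : α} (hy : y ∉ R) (hyB : y ∈ B) : B = insert y R :=
    (Finset.eq_of_subset_of_card_le (Finset.insert_subset hyB hRB)
      (by rw [Finset.card_insert_of_notMem hy, hB])).symm
  rcases hx with ⟨hxB, rfl | rfl⟩
  · exact Or.inl (hins ha hxB)
  · exact Or.inr (hins hc hxB)

/-- The sets `Ra` and `Rc` attain the bound of `two_mul_card_inter_add_lt_or_eq`. -/
theorem two_mul_card_inter_add_eq {α : Type*} [DecidableEq α] {B R : Finset α} {a c : α}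
    (ha : a ∉ R) (hc : c ∉ R) (hB : B = insert a R ∨ B = insert c R) :
    2 * (B ∩ R).card + (B ∩ {a, c}).card = 2 * R.card + 1 := by
  rcases hB with rfl | rfl
  · have h1 : insert a R ∩ R = R := by simp
    have h2 : insert a R ∩ {a, c} = {a} := by
      ext x
      simp only [Finset.mem_inter, Finset.mem_insert, Finset.mem_singleton]
      grind
    rw [h1, h2, Finset.card_singleton]
  · have h1 : insert c R ∩ R = R := by simp
    have h2 : insert c R ∩ {a, c} = {c} := by
      ext x
      simp only [Finset.mem_inter, Finset.mem_insert, Finset.mem_singleton]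
      grind
    rw [h1, h2, Finset.card_singleton]

theorem card_union_inter_union {α : Type*} [DecidableEq α] (S X Y P Q : Finset α)
    (hX : ∀ x ∈ X, x ∈ S) (hY : ∀ x ∈ Y, x ∉ S) (hP : ∀ x ∈ P, x ∈ S) (hQ : ∀ x ∈ Q, x ∉ S) :
    ((X ∪ Y) ∩ (P ∪ Q)).card = (X ∩ P).card + (Y ∩ Q).card := by
  rw [← Finset.card_union_of_disjoint]
  · congr 1
    ext x
    have := hX x
    have := hY x
    have := hP x
    have := hQ x
    simp only [Finset.mem_inter, Finset.mem_union]
    tauto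
  · exact Finset.disjoint_left.2 fun x h1 h2 =>
      hQ x (Finset.mem_inter.1 h2).2 (hP x (Finset.mem_inter.1 h1).2)

theorem sum_mul_ind (n : ℕ) (R Q B : Finset (Fin n)) :
    ∑ i, (2 * ind n R i + ind n Q i) * ind n B i = ((2 * (B ∩ R).card + (B ∩ Q).card : ℕ) : ℝ) := by
  have h (X : Finset (Fin n)) : ∑ i, ind n X i * ind n B i = ((B ∩ X).card : ℝ) := by
    simp only [ind, ← ite_and, mul_ite, mul_one, mul_zero]
    rw [Finset.sum_boole]
    congr 2
    ext i
    simp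
  simp only [add_mul, mul_assoc, Finset.sum_add_distrib, ← Finset.mul_sum, h]
  push_cast
  ring

/-- The parallelogram with vertices `p, p + v, p + u, p + u + v` is two-dimensional. -/
theorem finrank_direction_parallelogram {E : Type*} [AddCommGroup E] [Module ℝ E]
    (p u v : E) (huv : LinearIndependent ℝ ![u, v]) :
    Module.finrank ℝ (affineSpan ℝ
      (convexHull ℝ {p, p + v, p + u, p + u + v} : Set E)).direction = 2 := by
  rw [affineSpan_convexHull, direction_affineSpan,
    vectorSpan_eq_span_vsub_set_right ℝ (Set.mem_insert p _)]
  have hspan : Submodule.span ℝ ((· -ᵥ p) '' ({p, p + v, p + u, p + u + v} : Set E)) =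
      Submodule.span ℝ (Set.range ![u, v]) := by
    simp only [Set.image_insert_eq, Set.image_singleton, vsub_eq_sub, sub_self,
      add_sub_cancel_left, Matrix.range_cons, Matrix.range_empty, Set.union_empty, add_assoc]
    apply le_antisymm
    · rw [Submodule.span_le]
      have hu : u ∈ Submodule.span ℝ ({u} ∪ {v} : Set E) := Submodule.subset_span (by simp)
      have hv : v ∈ Submodule.span ℝ ({u} ∪ {v} : Set E) := Submodule.subset_span (by simp)
      rintro x (rfl | rfl | rfl | rfl)
      · exact Submodule.zero_mem _
      · exact hv
      · exact hu
      · exact Submodule.add_mem _ hu hv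
    · apply Submodule.span_mono
      rintro x (rfl | rfl) <;> simp
  rw [hspan, finrank_span_eq_card huv, Fintype.card_fin]

theorem ind_insert (n : ℕ) (x : Fin n) (R : Finset (Fin n)) (hx : x ∉ R) :
    ind n (insert x R) = ind n R + Pi.single x 1 := by
  ext i
  rcases eq_or_ne i x with rfl | h
  · simp [ind, hx]
  · simp [ind, h]

/-- The four points `Rab, Rad, Rbc, Rcd` span a plane. -/
theorem finrank_direction_square {n : ℕ} (R : Finset (Fin n)) {a b c d : Fin n}
    (hab : a < b) (hbc : b < c) (hcd : c < d) (ha : a ∉ R) (hb : b ∉ R) (hc : c ∉ R)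
    (hd : d ∉ R) :
    Module.finrank ℝ (affineSpan ℝ
      (convexHull ℝ {ind n (insert a (insert b R)), ind n (insert a (insert d R)),
        ind n (insert b (insert c R)), ind n (insert c (insert d R))} :
          Set (Fin n → ℝ))).direction = 2 := by
  have had := hab.trans (hbc.trans hcd)
  have hac := hab.trans hbc
  have hbd := hbc.trans hcd
  have hli : LinearIndependent ℝ
      ![(Pi.single c 1 - Pi.single a 1 : Fin n → ℝ), Pi.single d 1 - Pi.single b 1] := by
    rw [LinearIndependent.pair_iff]
    intro s t hst
    have h1 := congrFun hst c
    have h2 := congrFun hst d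
    simp [hac.ne', hbc.ne', hcd.ne, hcd.ne', had.ne', hbd.ne'] at h1 h2
    exact ⟨h1, h2⟩
  have key := finrank_direction_parallelogram (ind n (insert a (insert b R))) _ _ hli
  rw [ind_insert n a _ (by simp [ha, hab.ne]), ind_insert n b _ hb] at key ⊢
  rw [ind_insert n a _ (by simp [ha, had.ne]), ind_insert n b _ (by simp [hb, hbc.ne]),
    ind_insert n c (insert d R) (by simp [hc, hcd.ne]), ind_insert n c R hc, ind_insert n d _ hd]
  generalize ind n R = p at key ⊢
  have e1 : p + Pi.single d 1 + Pi.single a 1 =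
      p + Pi.single b 1 + Pi.single a 1 + (Pi.single d 1 - Pi.single b 1) := by abel
  have e2 : p + Pi.single c 1 + Pi.single b 1 =
      p + Pi.single b 1 + Pi.single a 1 + (Pi.single c 1 - Pi.single a 1) := by abel
  have e3 : p + Pi.single d 1 + Pi.single c 1 =
      p + Pi.single b 1 + Pi.single a 1 + (Pi.single c 1 - Pi.single a 1) +
        (Pi.single d 1 - Pi.single b 1) := by abel
  rw [e1, e2, e3]
  exact key

/-- **Crossing direct sums give non-positroidal square faces.** Suppose the rank-`k`
matroid `M = M₁ ⊕ M₂` on `[n]` has two connected components, with ground sets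
`S` and `T = [n] \ S`, and `{S,T}` is a crossing partition (there are
`a < b < c < d` with `a, c ∈ S`, `b, d ∈ T`).  Then `Γ_M` has a two-dimensional
square face with vertex set `{e_{Rab}, e_{Rad}, e_{Rbc}, e_{Rcd}}` for some
`(k−2)`-set `R` disjoint from `{a,b,c,d}`; in particular this face is not a
positroid polytope. -/
theorem crossing_direct_sum_square_face (n k k₁ k₂ : ℕ) (S : Finset (Fin n))
    (𝓑₁ 𝓑₂ 𝓑 : Finset (Finset (Fin n)))
    -- M₁ is a matroid on ground set S
    (h₁sub : ∀ B ∈ 𝓑₁, B ⊆ S) (h₁0 : 𝓑₁.Nonempty) (h₁k : ∀ B ∈ 𝓑₁, B.card = k₁)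
    (h₁ex : ExchangeAxiom n 𝓑₁)
    -- M₂ is a matroid on ground set T = Sᶜ
    (h₂sub : ∀ B ∈ 𝓑₂, B ⊆ Sᶜ) (h₂0 : 𝓑₂.Nonempty) (h₂k : ∀ B ∈ 𝓑₂, B.card = k₂)
    (h₂ex : ExchangeAxiom n 𝓑₂)
    -- M₁ and M₂ are connected on their ground sets
    (h₁conn : ∀ a ∈ S, ∀ b ∈ S, exchRel n 𝓑₁ a b)
    (h₂conn : ∀ a ∈ Sᶜ, ∀ b ∈ Sᶜ, exchRel n 𝓑₂ a b)
    -- M = M₁ ⊕ M₂ has rank k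
    (hkk : k₁ + k₂ = k)
    (h𝓑 : ∀ B : Finset (Fin n), B ∈ 𝓑 ↔ ∃ B₁ ∈ 𝓑₁, ∃ B₂ ∈ 𝓑₂, B = B₁ ∪ B₂)
    -- {S, T} is a crossing partition
    (a b c d : Fin n) (hab : a < b) (hbc : b < c) (hcd : c < d)
    (haS : a ∈ S) (hcS : c ∈ S) (hbT : b ∉ S) (hdT : d ∉ S) :
    ∃ a' b' c' d' : Fin n, a' < b' ∧ b' < c' ∧ c' < d' ∧
      ∃ R : Finset (Fin n), R.card + 2 = k ∧
        a' ∉ R ∧ b' ∉ R ∧ c' ∉ R ∧ d' ∉ R ∧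
        IsFaceOf n (polytopeOf n 𝓑)
          (convexHull ℝ {ind n (insert a' (insert b' R)), ind n (insert a' (insert d' R)),
            ind n (insert b' (insert c' R)), ind n (insert c' (insert d' R))}) ∧
        Module.finrank ℝ (affineSpan ℝ
          (convexHull ℝ {ind n (insert a' (insert b' R)), ind n (insert a' (insert d' R)),
            ind n (insert b' (insert c' R)), ind n (insert c' (insert d' R))} :
              Set (Fin n → ℝ))).direction = 2 ∧
        ¬ IsPositroid n k ({insert a' (insert b' R), insert a' (insert d' R),
            insert b' (insert c' R), insert c' (insert d' R)} : Set (Finset (Fin n))) := by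
  obtain ⟨B₁, hB₁, B₁', hB₁', haB, hcB, hBc⟩ :=
    (h₁conn a haS c hcS).resolve_left (hab.trans hbc).ne
  obtain ⟨B₂, hB₂, B₂', hB₂', hbB, hdB, hBd⟩ :=
    (h₂conn b (by simpa) d (by simpa)).resolve_left (hbc.trans hcd).ne
  obtain ⟨R₁, ha₁, rfl⟩ : ∃ R₁, a ∉ R₁ ∧ B₁ = insert a R₁ :=
    ⟨B₁.erase a, by simp, (Finset.insert_erase haB).symm⟩
  obtain ⟨R₂, hb₂, rfl⟩ : ∃ R₂, b ∉ R₂ ∧ B₂ = insert b R₂ :=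
    ⟨B₂.erase b, by simp, (Finset.insert_erase hbB).symm⟩
  rw [Finset.erase_insert ha₁] at hBc
  rw [Finset.erase_insert hb₂] at hBd
  subst hBc hBd
  have hc₁ : c ∉ R₁ := fun h => hcB (Finset.mem_insert_of_mem h)
  have hd₂ : d ∉ R₂ := fun h => hdB (Finset.mem_insert_of_mem h)
  have hR₁S : ∀ x ∈ R₁, x ∈ S := fun x hx => h₁sub _ hB₁ (Finset.mem_insert_of_mem hx)
  have hR₂S : ∀ x ∈ R₂, x ∉ S := fun x hx =>
    Finset.mem_compl.1 (h₂sub _ hB₂ (Finset.mem_insert_of_mem hx))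
  have hk₁ : R₁.card + 1 = k₁ := by rw [← h₁k _ hB₁, Finset.card_insert_of_notMem ha₁]
  have hk₂ : R₂.card + 1 = k₂ := by rw [← h₂k _ hB₂, Finset.card_insert_of_notMem hb₂]
  have hdisj : Disjoint R₁ R₂ := Finset.disjoint_left.2 fun x h1 h2 => hR₂S x h2 (hR₁S x h1)
  have hcard : (R₁ ∪ R₂).card + 2 = k := by
    rw [Finset.card_union_of_disjoint hdisj]
    omega
  have ha : a ∉ R₁ ∪ R₂ := by
    simp only [Finset.mem_union, not_or]
    exact ⟨ha₁, fun h => hR₂S a h haS⟩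
  have hb : b ∉ R₁ ∪ R₂ := by
    simp only [Finset.mem_union, not_or]
    exact ⟨fun h => hbT (hR₁S b h), hb₂⟩
  have hc : c ∉ R₁ ∪ R₂ := by
    simp only [Finset.mem_union, not_or]
    exact ⟨hc₁, fun h => hR₂S c h hcS⟩
  have hd : d ∉ R₁ ∪ R₂ := by
    simp only [Finset.mem_union, not_or]
    exact ⟨fun h => hdT (hR₁S d h), hd₂⟩
  have eab : insert a R₁ ∪ insert b R₂ = insert a (insert b (R₁ ∪ R₂)) := by grind
  have ead : insert a R₁ ∪ insert d R₂ = insert a (insert d (R₁ ∪ R₂)) := by grind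
  have ebc : insert c R₁ ∪ insert b R₂ = insert b (insert c (R₁ ∪ R₂)) := by grind
  have ecd : insert c R₁ ∪ insert d R₂ = insert c (insert d (R₁ ∪ R₂)) := by grind
  refine ⟨a, b, c, d, hab, hbc, hcd, R₁ ∪ R₂, hcard, ha, hb, hc, hd, ?_,
    finrank_direction_square _ hab hbc hcd ha hb hc hd, ?_⟩
  swap
  · rw [← hcard]
    exact not_isPositroid_crossing_square _ hab hbc hcd ha hb hc hd
  rw [← eab, ← ead, ← ebc, ← ecd]
  set w : Fin n → ℝ := fun i => 2 * ind n (R₁ ∪ R₂) i + ind n ({a, c} ∪ {b, d}) i with hw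
  have hweight : ∀ X ∈ 𝓑₁, ∀ Y ∈ 𝓑₂, ∑ i, w i * ind n (X ∪ Y) i =
      ((2 * (X ∩ R₁).card + (X ∩ {a, c}).card + (2 * (Y ∩ R₂).card + (Y ∩ {b, d}).card) : ℕ) : ℝ) := by
    intro X hX Y hY
    have hXS := h₁sub X hX
    have hYS : ∀ y ∈ Y, y ∉ S := fun y hy => Finset.mem_compl.1 (h₂sub Y hY hy)
    rw [hw, sum_mul_ind, card_union_inter_union S X Y R₁ R₂ hXS hYS hR₁S hR₂S,
      card_union_inter_union S X Y {a, c} {b, d} hXS hYS (by simp [haS, hcS])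
      (by simp [hbT, hdT])]
    congr 1
    ring
  have hdich₁ : ∀ X ∈ 𝓑₁, _ := fun X hX =>
    two_mul_card_inter_add_lt_or_eq X R₁ a c ha₁ hc₁ ((h₁k X hX).trans hk₁.symm)
  have hdich₂ : ∀ Y ∈ 𝓑₂, _ := fun Y hY =>
    two_mul_card_inter_add_lt_or_eq Y R₂ b d hb₂ hd₂ ((h₂k Y hY).trans hk₂.symm)
  let f : (Fin n → ℝ) →ₗ[ℝ] ℝ := ∑ i, w i • LinearMap.proj i
  have hf (x : Fin n → ℝ) : f x = ∑ i, w i * x i := by simp [f]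
  refine ⟨w, ?_⟩
  simp only [← hf]
  refine setOf_isMax_convexHull f ((2 * R₁.card + 1 + (2 * R₂.card + 1) : ℕ) : ℝ) _ _
    ?_ (Set.insert_nonempty _ _) ?_ ?_
  · rintro v (rfl | rfl | rfl | rfl) <;> refine Set.mem_image_of_mem _ ((h𝓑 _).2 ?_)
    exacts [⟨_, hB₁, _, hB₂, rfl⟩, ⟨_, hB₁, _, hB₂', rfl⟩, ⟨_, hB₁', _, hB₂, rfl⟩,
      ⟨_, hB₁', _, hB₂', rfl⟩]
  · rintro v (rfl | rfl | rfl | rfl)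
    · rw [hf, hweight _ hB₁ _ hB₂, two_mul_card_inter_add_eq ha₁ hc₁ (by simp),
        two_mul_card_inter_add_eq hb₂ hd₂ (by simp)]
    · rw [hf, hweight _ hB₁ _ hB₂', two_mul_card_inter_add_eq ha₁ hc₁ (by simp),
        two_mul_card_inter_add_eq hb₂ hd₂ (by simp)]
    · rw [hf, hweight _ hB₁' _ hB₂, two_mul_card_inter_add_eq ha₁ hc₁ (by simp),
        two_mul_card_inter_add_eq hb₂ hd₂ (by simp)]
    · rw [hf, hweight _ hB₁' _ hB₂', two_mul_card_inter_add_eq ha₁ hc₁ (by simp),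
        two_mul_card_inter_add_eq hb₂ hd₂ (by simp)]
  · rintro v ⟨B, hB, rfl⟩ hv
    obtain ⟨X, hX, Y, hY, rfl⟩ := (h𝓑 B).1 hB
    rw [hf, hweight X hX Y hY, Nat.cast_lt]
    rcases hdich₁ X hX with h1 | ⟨h1, hX'⟩
    · rcases hdich₂ Y hY with h2 | ⟨h2, -⟩ <;> omega
    rcases hdich₂ Y hY with h2 | ⟨h2, hY'⟩
    · omega
    exact absurd (by rcases hX' with rfl | rfl <;> rcases hY' with rfl | rfl <;> simp) hv
end

section
/- A matroid M of rank k on [n] is a positroid if and only if every two-dimensional face of its matroid polytope Γ_M is a positroid polytope. Moreover, if M is not a positroid, then Γ_M has a two-dimensional face with vertex set {e_{Sab}, e_{Sad}, e_{Sbc}, e_{Scd}} for some 1 ≤ a < b < c < d ≤ n and some (k−2)-set S disjoint from {a,b,c,d}. -/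
open scoped BigOperators

theorem exists_matroid_of_exchangeAxiom {n : ℕ} {𝓑 : Finset (Finset (Fin n))} (h0 : 𝓑.Nonempty)
    (hex : ExchangeAxiom n 𝓑) :
    ∃ M : Matroid (Fin n), M.E = Set.univ ∧ ∀ T : Finset (Fin n), M.IsBase ↑T ↔ T ∈ 𝓑 := by
  classical
  refine ⟨Matroid.ofIsBaseOfFinite (E := Set.univ) Set.finite_univ
    (fun B => ∃ T ∈ 𝓑, (T : Set (Fin n)) = B) ?_ ?_ (fun _ _ => Set.subset_univ _), rfl, ?_⟩
  · obtain ⟨T, hT⟩ := h0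
    exact ⟨T, T, hT, rfl⟩
  · rintro _ _ ⟨T, hT, rfl⟩ ⟨T', hT', rfl⟩ x hx
    obtain ⟨y, hy, h⟩ := hex T hT T' hT' x (by simpa using hx)
    exact ⟨y, by simpa using hy, _, h, by simp⟩
  · intro T
    change (∃ T' ∈ 𝓑, (T' : Set (Fin n)) = T) ↔ T ∈ 𝓑
    simp

/-- The set `F` violates the rank inequality at `B`: no member of `𝓑` meets `F` in as many
elements as `B` does. -/
def Violates {n : ℕ} (𝓑 : Finset (Finset (Fin n))) (B F : Finset (Fin n)) : Prop :=
  ∀ T ∈ 𝓑, (T ∩ F).card < (B ∩ F).card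

/-- The set `T` meets `F` in at least as many elements as every member of `𝓑`. -/
def Saturates {n : ℕ} (𝓑 : Finset (Finset (Fin n))) (T F : Finset (Fin n)) : Prop :=
  ∀ T' ∈ 𝓑, (T' ∩ F).card ≤ (T ∩ F).card

section Matroid

variable {n k : ℕ} {𝓑 : Finset (Finset (Fin n))} {M : Matroid (Fin n)}

theorem Saturates.isBasis (hE : M.E = Set.univ)
    (hM : ∀ T : Finset (Fin n), M.IsBase ↑T ↔ T ∈ 𝓑) {T F : Finset (Fin n)} (hT : T ∈ 𝓑)
    (h : Saturates 𝓑 T F) : M.IsBasis ↑(T ∩ F) ↑F := by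
  classical
  have hi : M.Indep ↑(T ∩ F) := ((hM T).2 hT).indep.subset (by simp)
  obtain ⟨J, hJ, hJT⟩ := hi.subset_isBasis_of_subset (X := (F : Set (Fin n)))
    (by simp) (by simp [hE])
  obtain ⟨B, hB, hJB⟩ := hJ.indep.exists_isBase_superset
  lift J to Finset (Fin n) using Set.toFinite J
  lift B to Finset (Fin n) using Set.toFinite B
  have h1 := h B ((hM B).1 hB)
  have hJF : J ⊆ F := by exact_mod_cast hJ.subset
  have hJB' : J ⊆ B := by exact_mod_cast hJB
  have h2 : J.card ≤ (B ∩ F).card := Finset.card_le_card (Finset.subset_inter hJB' hJF)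
  have h3 : T ∩ F = J := Finset.eq_of_subset_of_card_le (by exact_mod_cast hJT) (by omega)
  rwa [h3]

theorem saturates_of_isBasis (hM : ∀ T : Finset (Fin n), M.IsBase ↑T ↔ T ∈ 𝓑)
    {T F : Finset (Fin n)} (h : M.IsBasis ↑(T ∩ F) ↑F) : Saturates 𝓑 T F := by
  intro T' hT'
  have h1 := (((hM T').2 hT').indep.subset (show ((T' ∩ F : Finset (Fin n)) : Set (Fin n)) ⊆ T' by
    simp)).encard_le_eRk_of_subset (X := (F : Set (Fin n))) (by simp)
  rw [← h.encard_eq_eRk] at h1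
  simpa only [Set.encard_coe_eq_coe_finsetCard, Nat.cast_le] using h1

theorem isBase_union_sdiff_of_isBasis (hE : M.E = Set.univ)
    {T F K : Finset (Fin n)} (hT : M.IsBase (T : Set (Fin n)))
    (hK : M.IsBasis (K : Set (Fin n)) F) (hTF : M.IsBasis ↑(T ∩ F) ↑F) :
    M.IsBase ↑(K ∪ T \ F) := by
  classical
  have hsp : M.Spanning ↑(K ∪ T \ F) := by
    rw [Matroid.spanning_iff_ground_subset_closure (by simp [hE])]
    have h1 : M.closure ↑(K ∪ T \ F) = M.closure (↑F ∪ ↑(T \ F)) := by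
      rw [Finset.coe_union]
      exact M.closure_union_congr_left hK.closure_eq_closure
    rw [h1, ← hT.closure_eq]
    refine M.closure_subset_closure ?_
    intro x hx
    by_cases hxF : x ∈ F <;> simp_all
  obtain ⟨B, hB, hBs⟩ := hsp.exists_isBase_subset
  lift B to Finset (Fin n) using Set.toFinite B
  have h2 : B.card = T.card := by
    have := hB.encard_eq_encard_of_isBase hT
    simpa using this
  have h3 : K.card = (T ∩ F).card := by
    have := hK.encard_eq_encard hTF
    simpa only [Set.encard_coe_eq_coe_finsetCard, Nat.cast_inj] using this
  have h4 := Finset.card_inter_add_card_sdiff T F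
  have h5 := Finset.card_union_le K (T \ F)
  have h6 : B = K ∪ T \ F :=
    Finset.eq_of_subset_of_card_le (by exact_mod_cast hBs) (by omega)
  rwa [← h6]

theorem Saturates.mix (hE : M.E = Set.univ)
    (hM : ∀ T : Finset (Fin n), M.IsBase ↑T ↔ T ∈ 𝓑) {T T' F : Finset (Fin n)} (hT : T ∈ 𝓑)
    (h : Saturates 𝓑 T F) (hT' : T' ∈ 𝓑) (h' : Saturates 𝓑 T' F) :
    (T ∩ F) ∪ T' \ F ∈ 𝓑 :=
  (hM _).1 (isBase_union_sdiff_of_isBasis hE ((hM _).2 hT') (h.isBasis hE hM hT)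
    (h'.isBasis hE hM hT'))

theorem Violates.exists_exchange (hE : M.E = Set.univ)
    (hM : ∀ T : Finset (Fin n), M.IsBase ↑T ↔ T ∈ 𝓑) {B F X : Finset (Fin n)}
    (hF : Violates 𝓑 B F) (hXF : X ⊆ F) (hX : ¬ Violates 𝓑 B X) (hY : ¬ Violates 𝓑 B (F \ X)) :
    ∃ T ∈ 𝓑, Saturates 𝓑 T F ∧ ∃ a ∈ X, ∃ c ∈ F \ X, a ∈ T ∧ c ∉ T ∧
      insert c (T.erase a) ∈ 𝓑 := by
  classical
  simp only [Violates, not_forall, not_lt] at hX hY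
  obtain ⟨T₁, hT₁, hX⟩ := hX
  obtain ⟨T₂, hT₂, hY⟩ := hY
  obtain ⟨I, hI⟩ := M.exists_isBasis (X : Set (Fin n)) (by simp [hE])
  obtain ⟨J, hJ, hIJ⟩ := hI.indep.subset_isBasis_of_subset (X := (F : Set (Fin n)))
    (hI.subset.trans (by exact_mod_cast hXF)) (by simp [hE])
  obtain ⟨T, hT, hJT⟩ := hJ.indep.exists_isBase_superset
  lift I to Finset (Fin n) using Set.toFinite I
  lift J to Finset (Fin n) using Set.toFinite J
  lift T to Finset (Fin n) using Set.toFinite T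
  have hTF : J = T ∩ F := by
    have hi : M.Indep (((T ∩ F : Finset (Fin n)) : Set (Fin n))) :=
      hT.indep.subset (by simp)
    have := hJ.eq_of_subset_indep hi (by simpa using ⟨hJT, hJ.subset⟩) (by simp)
    exact_mod_cast this
  have hJX : I = J ∩ X := by
    have hi : M.Indep (((J ∩ X : Finset (Fin n)) : Set (Fin n))) :=
      hJ.indep.subset (by simp)
    have := hI.eq_of_subset_indep hi (by simpa using ⟨hIJ, hI.subset⟩) (by simp)
    exact_mod_cast this
  have hsat : Saturates 𝓑 T F := saturates_of_isBasis hM (hTF ▸ hJ)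
  have hT' := (hM T).1 hT
  have e1 := hF T hT'
  have e2 : (T₁ ∩ X).card ≤ I.card := by
    have h1 := (((hM T₁).2 hT₁).indep.subset
      (show ((T₁ ∩ X : Finset (Fin n)) : Set (Fin n)) ⊆ T₁ by simp)).encard_le_eRk_of_subset
      (X := (X : Set (Fin n))) (by simp)
    rw [← hI.encard_eq_eRk] at h1
    simpa only [Set.encard_coe_eq_coe_finsetCard, Nat.cast_le] using h1
  have e3 := Finset.card_inter_add_card_sdiff J X
  have e4 : (B ∩ F).card = (B ∩ X).card + (B ∩ (F \ X)).card := by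
    rw [← Finset.card_union_of_disjoint]
    · congr 1
      ext x
      have := @hXF x
      simp only [Finset.mem_inter, Finset.mem_union, Finset.mem_sdiff]
      tauto
    · rw [Finset.disjoint_left]
      intro x
      simp only [Finset.mem_inter, Finset.mem_sdiff]
      tauto
  rw [← hTF] at e1
  rw [← hJX] at e3
  have e5 : (J \ X).card < (T₂ ∩ (F \ X)).card := by omega
  have hi1 : M.Indep ↑(J \ X) := hJ.indep.subset (by simp)
  have hi2 : M.Indep ↑(T₂ ∩ (F \ X)) := ((hM T₂).2 hT₂).indep.subset (by
    rw [Finset.coe_inter]; exact Set.inter_subset_left)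
  obtain ⟨c, hc, hci⟩ := hi1.exists_insert_of_encard_lt hi2
    (by simpa only [Set.encard_coe_eq_coe_finsetCard, Nat.cast_lt] using e5)
  have hcF : c ∈ F \ X := by
    have := hc.1
    simp only [Finset.coe_inter, Set.mem_inter_iff, Finset.mem_coe] at this
    exact this.2
  have hcJ : c ∉ J := fun h => hc.2 (by simp [h, (Finset.mem_sdiff.1 hcF).2])
  have hcF' := (Finset.mem_sdiff.1 hcF).1
  obtain ⟨K, hK, hcK⟩ := hci.subset_isBasis_of_subset
    (X := ((insert c J : Finset (Fin n)) : Set (Fin n)))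
    (by
      simp only [Finset.coe_sdiff, Finset.coe_insert]
      exact Set.insert_subset_insert Set.sdiff_subset) (by simp [hE])
  lift K to Finset (Fin n) using Set.toFinite K
  have hJc : M.IsBasis (J : Set (Fin n)) ((insert c J : Finset (Fin n)) : Set (Fin n)) :=
    hJ.isBasis_subset (by simp) (by
      intro x hx
      simp only [Finset.coe_insert, Set.mem_insert_iff, Finset.mem_coe] at hx
      rcases hx with rfl | hx
      · exact hcF'
      · exact hJ.subset hx)
  have hKJ : K.card = J.card := by
    have := hK.encard_eq_encard hJc
    simpa only [Set.encard_coe_eq_coe_finsetCard, Nat.cast_inj] using this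
  have hKs : K ⊆ insert c J := by exact_mod_cast hK.subset
  have hcK' : c ∈ K := by
    have : c ∈ (K : Set (Fin n)) := hcK (by simp)
    simpa using this
  obtain ⟨a, haJ, haK⟩ : ∃ a ∈ J, a ∉ K := by
    by_contra! h
    have : insert c J ⊆ K := by
      intro x hx
      rcases Finset.mem_insert.1 hx with rfl | hx
      · exact hcK'
      · exact h x hx
    have := Finset.card_le_card this
    rw [Finset.card_insert_of_notMem hcJ] at this
    omega
  have haX : a ∈ X := by
    by_contra h
    have : a ∈ (K : Set (Fin n)) := hcK (by simp [haJ, h])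
    exact haK (by simpa using this)
  have hKe : K = insert c (J.erase a) := by
    refine Finset.eq_of_subset_of_card_le (fun x hx => ?_) ?_
    · have := hKs hx
      have hxa : x ≠ a := fun h => haK (h ▸ hx)
      simp_all
    · rw [Finset.card_insert_of_notMem (by simp [hcJ]), Finset.card_erase_of_mem haJ]
      have := Finset.card_pos.2 ⟨a, haJ⟩
      omega
  have hJF : J ⊆ F := by exact_mod_cast hJ.subset
  have hKF : M.IsBasis (K : Set (Fin n)) F := by
    refine hK.indep.isBasis_of_eRk_ge (Set.toFinite _) ?_ ?_
    · intro x hx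
      rcases Finset.mem_insert.1 (hKs (by simpa using hx)) with rfl | hx
      · exact hcF'
      · exact hJF hx
    · rw [← hJ.encard_eq_eRk, hK.indep.eRk_eq_encard]
      simp [hKJ]
  have hb := isBase_union_sdiff_of_isBasis hE hT hKF (hTF ▸ hJ)
  have haT : a ∈ T := by rw [hTF] at haJ; simp_all
  have hcT : c ∉ T := fun h => hcJ (by rw [hTF]; simp [h, hcF'])
  refine ⟨T, hT', hsat, a, haX, c, hcF, haT, hcT, ?_⟩
  rw [hM] at hb
  convert hb using 1
  rw [hKe, hTF]
  have haF := hJF haJ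
  ext x
  simp only [Finset.mem_insert, Finset.mem_erase, Finset.mem_union, Finset.mem_inter,
    Finset.mem_sdiff]
  by_cases hxF : x ∈ F
  · simp [hxF]
  · have : x ≠ a := fun h => hxF (h ▸ haF)
    simp [hxF, this]

end Matroid

/-- The positions at which membership in `F` changes between an element and its successor. -/
def boundary {n : ℕ} (F : Finset (Fin n)) : Finset (Fin n) :=
  open Classical in
  Finset.univ.filter fun i => ∃ j : Fin n, j.val = i.val + 1 ∧ ¬ (i ∈ F ↔ j ∈ F)

section Boundary

variable {n : ℕ} {F : Finset (Fin n)}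

theorem mem_boundary {i : Fin n} :
    i ∈ boundary F ↔ ∃ j : Fin n, j.val = i.val + 1 ∧ ¬ (i ∈ F ↔ j ∈ F) := by
  simp [boundary]

theorem boundary_compl : boundary Fᶜ = boundary F := by
  ext i
  simp only [mem_boundary, Finset.mem_compl, not_iff_not]

theorem exists_mem_boundary_of_lt {u v : Fin n} (huv : u < v) (h : ¬ (u ∈ F ↔ v ∈ F)) :
    ∃ p ∈ boundary F, u ≤ p ∧ p < v := by
  obtain ⟨m, hm⟩ : ∃ m, v.val = u.val + 1 + m := ⟨v.val - u.val - 1, by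
    have := Fin.lt_def.1 huv
    omega⟩
  induction m generalizing v with
  | zero => exact ⟨u, mem_boundary.2 ⟨v, by omega, h⟩, le_rfl, huv⟩
  | succ m ih =>
    have hv := v.isLt
    let v' : Fin n := ⟨u.val + 1 + m, by omega⟩
    have hv' : v'.val = u.val + 1 + m := rfl
    by_cases h' : u ∈ F ↔ v' ∈ F
    · refine ⟨v', mem_boundary.2 ⟨v, by omega, by tauto⟩, ?_, ?_⟩ <;>
        simp only [Fin.le_def, Fin.lt_def] <;> omega
    · obtain ⟨p, hp, h1, h2⟩ := ih (v := v') (by simp only [Fin.lt_def]; omega) h' hv'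
      refine ⟨p, hp, h1, ?_⟩
      simp only [Fin.lt_def] at h2 ⊢
      omega

theorem card_boundary_lt {G : Finset (Fin n)} (h : boundary G ⊆ boundary F) {p : Fin n}
    (hp : p ∈ boundary F) (hp' : p ∉ boundary G) : (boundary G).card < (boundary F).card :=
  Finset.card_lt_card ⟨h, fun h' => hp' (h' hp)⟩

set_option maxHeartbeats 1000000 in
theorem exists_crossing_of_notMem {R R' : Fin n → Fin n → Prop}
    (hR : ∀ X ⊆ F, (boundary X).card < (boundary F).card →
      (boundary (F \ X)).card < (boundary F).card → ∃ a ∈ X, ∃ c ∈ F \ X, R a c)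
    (hR' : ∀ Y ⊆ Fᶜ, (boundary Y).card < (boundary F).card →
      (boundary (Fᶜ \ Y)).card < (boundary F).card → ∃ b ∈ Y, ∃ d ∈ Fᶜ \ Y, R' b d)
    {p₁ p₂ p₃ : Fin n} (h₁ : p₁ ∈ boundary F) (h₂ : p₂ ∈ boundary F) (h₃ : p₃ ∈ boundary F)
    (h₁₂ : p₁ < p₂) (h₂₃ : p₂ < p₃) (hmin : ∀ p ∈ boundary F, p₁ ≤ p)
    (hmin' : ∀ p ∈ boundary F, p₁ < p → p₂ ≤ p) (hp₁ : p₁ ∉ F) :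
    ∃ a ∈ F, ∃ b ∈ Fᶜ, ∃ c ∈ F, ∃ d ∈ Fᶜ, R a c ∧ R' b d ∧ a < b ∧ b < c ∧ (d < a ∨ c < d) := by
  classical
  have hnb : ∀ i j : Fin n, j.val = i.val + 1 → i ∉ boundary F → (i ∈ F ↔ j ∈ F) := by
    intro i j hij hi
    by_contra h
    exact hi (mem_boundary.2 ⟨j, hij, h⟩)
  obtain ⟨a, ha, c, hc, hac⟩ := hR (F.filter fun i => p₁ < i ∧ i ≤ p₂) (Finset.filter_subset _ _)
    (by
      refine card_boundary_lt (fun i hi => ?_) h₃ ?_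
      · by_contra hi'
        obtain ⟨j, hj, h⟩ := mem_boundary.1 hi
        have := hnb i j hj hi'
        have h1 : i ≠ p₁ := fun h => hi' (h ▸ h₁)
        have h2 : i ≠ p₂ := fun h => hi' (h ▸ h₂)
        simp only [Finset.mem_filter, Fin.lt_def, Fin.le_def] at *
        grind
      · intro h
        obtain ⟨j, hj, h⟩ := mem_boundary.1 h
        simp only [Finset.mem_filter, Fin.lt_def, Fin.le_def] at *
        grind)
    (by
      refine card_boundary_lt (fun i hi => ?_) h₁ ?_
      · by_contra hi'
        obtain ⟨j, hj, h⟩ := mem_boundary.1 hi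
        have := hnb i j hj hi'
        have h1 : i ≠ p₁ := fun h => hi' (h ▸ h₁)
        have h2 : i ≠ p₂ := fun h => hi' (h ▸ h₂)
        simp only [Finset.mem_filter, Finset.mem_sdiff, Fin.lt_def, Fin.le_def] at *
        grind
      · intro h
        obtain ⟨j, hj, h⟩ := mem_boundary.1 h
        simp only [Finset.mem_filter, Finset.mem_sdiff, Fin.lt_def, Fin.le_def] at *
        grind)
  simp only [Finset.mem_filter, Finset.mem_sdiff, not_and] at ha hc
  obtain ⟨haF, ha1, ha2⟩ := ha
  obtain ⟨hcF, hc'⟩ := hc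
  have hc2 : p₂ < c := by
    rcases lt_trichotomy c p₁ with h | h | h
    · obtain ⟨p, hp, -, hp'⟩ := exists_mem_boundary_of_lt (F := F) h (by tauto)
      exact absurd (hmin p hp) (not_le.2 hp')
    · exact absurd (h ▸ hcF) hp₁
    · exact not_le.1 (hc' hcF h)
  have hp₂ : p₂ ∈ F := by
    by_contra h
    obtain ⟨p, hp, h1, h2⟩ := exists_mem_boundary_of_lt (F := F)
      (lt_of_le_of_ne ha2 fun h' => h (h' ▸ haF)) (by tauto)
    exact absurd (hmin' p hp (ha1.trans_le h1)) (not_le.2 h2)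
  obtain ⟨b, hb, d, hd, hbd⟩ := hR' (Fᶜ.filter fun i => a < i ∧ i < c) (Finset.filter_subset _ _)
    (by
      refine card_boundary_lt (fun i hi => ?_) h₁ ?_
      · by_contra hi'
        obtain ⟨j, hj, h⟩ := mem_boundary.1 hi
        have := hnb i j hj hi'
        have h1 : i.val = a.val → i = a := Fin.ext
        have h2 : j.val = c.val → j = c := Fin.ext
        simp only [Finset.mem_filter, Finset.mem_compl, Fin.lt_def, Fin.le_def] at *
        grind
      · intro h
        obtain ⟨j, hj, h⟩ := mem_boundary.1 h
        have h2 : j.val = a.val → j = a := Fin.ext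
        simp only [Finset.mem_filter, Finset.mem_compl, Fin.lt_def, Fin.le_def] at *
        grind)
    (by
      refine card_boundary_lt (fun i hi => ?_) h₂ ?_
      · by_contra hi'
        obtain ⟨j, hj, h⟩ := mem_boundary.1 hi
        have := hnb i j hj hi'
        have h1 : i.val = a.val → i = a := Fin.ext
        have h2 : j.val = c.val → j = c := Fin.ext
        simp only [Finset.mem_filter, Finset.mem_sdiff, Finset.mem_compl, Fin.lt_def,
          Fin.le_def] at *
        grind
      · intro h
        obtain ⟨j, hj, h⟩ := mem_boundary.1 h
        have h2 : j.val = c.val → j = c := Fin.ext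
        simp only [Finset.mem_filter, Finset.mem_sdiff, Finset.mem_compl, Fin.lt_def,
          Fin.le_def, hp₂, not_true_eq_false, false_and, false_iff, not_not] at h ha2 hc2
        have h3 : j ≠ c := fun h3 => h.1 (h3 ▸ hcF)
        have h4 : j.val ≠ c.val := fun h4 => h3 (h2 h4)
        exact h.2 ⟨h.1, by omega, by omega⟩)
  simp only [Finset.mem_filter, Finset.mem_sdiff, not_and, Finset.mem_compl] at hb hd
  refine ⟨a, haF, b, by simpa using hb.1, c, hcF, d, by simpa using hd.1, hac, hbd, hb.2.1,
    hb.2.2, ?_⟩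
  rcases lt_trichotomy d a with h | h | h
  · exact Or.inl h
  · exact absurd (h ▸ haF) hd.1
  · rcases lt_trichotomy d c with h' | h' | h'
    · exact absurd h' (hd.2 hd.1 h)
    · exact absurd (h' ▸ hcF) hd.1
    · exact Or.inr h'

theorem exists_crossing {R R' : Fin n → Fin n → Prop} (h3 : 3 ≤ (boundary F).card)
    (hR : ∀ X ⊆ F, (boundary X).card < (boundary F).card →
      (boundary (F \ X)).card < (boundary F).card → ∃ a ∈ X, ∃ c ∈ F \ X, R a c)
    (hR' : ∀ Y ⊆ Fᶜ, (boundary Y).card < (boundary F).card →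
      (boundary (Fᶜ \ Y)).card < (boundary F).card → ∃ b ∈ Y, ∃ d ∈ Fᶜ \ Y, R' b d) :
    ∃ a ∈ F, ∃ b ∈ Fᶜ, ∃ c ∈ F, ∃ d ∈ Fᶜ, R a c ∧ R' b d ∧
      (a < b ∧ b < c ∧ (d < a ∨ c < d) ∨ b < a ∧ a < d ∧ (c < b ∨ d < c)) := by
  have hne : (boundary F).Nonempty := Finset.card_pos.1 (by omega)
  obtain ⟨p₁, h₁, hmin⟩ := (boundary F).exists_minimal hne
  have hmin : ∀ p ∈ boundary F, p₁ ≤ p := fun p hp => (le_total p₁ p).elim id (hmin hp)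
  have hne₂ : ((boundary F).erase p₁).Nonempty :=
    Finset.card_pos.1 (by rw [Finset.card_erase_of_mem h₁]; omega)
  obtain ⟨p₂, h₂, hmin₂⟩ := ((boundary F).erase p₁).exists_minimal hne₂
  have hmin₂ : ∀ p ∈ boundary F, p₁ < p → p₂ ≤ p := fun p hp hlt =>
    (le_total p₂ p).elim id (hmin₂ (Finset.mem_erase.2 ⟨hlt.ne', hp⟩))
  have hne₃ : (((boundary F).erase p₁).erase p₂).Nonempty :=
    Finset.card_pos.1 (by rw [Finset.card_erase_of_mem h₂, Finset.card_erase_of_mem h₁]; omega)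
  obtain ⟨p₃, h₃⟩ := hne₃
  simp only [Finset.mem_erase] at h₂ h₃
  have h₁₂ : p₁ < p₂ := lt_of_le_of_ne (hmin p₂ h₂.2) (Ne.symm h₂.1)
  have h₂₃ : p₂ < p₃ := lt_of_le_of_ne
    (hmin₂ p₃ h₃.2.2 (lt_of_le_of_ne (hmin p₃ h₃.2.2) (Ne.symm h₃.2.1))) (Ne.symm h₃.1)
  by_cases hp : p₁ ∈ F
  · obtain ⟨a, ha, b, hb, c, hc, d, hd, h⟩ := exists_crossing_of_notMem (F := Fᶜ) (R := R')
      (R' := R) (by simpa only [boundary_compl] using hR')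
      (by simpa only [boundary_compl, compl_compl] using hR)
      (by simpa only [boundary_compl] using h₁) (by simpa only [boundary_compl] using h₂.2)
      (by simpa only [boundary_compl] using h₃.2.2) h₁₂ h₂₃
      (by simpa only [boundary_compl] using hmin) (by simpa only [boundary_compl] using hmin₂)
      (by simpa using hp)
    rw [compl_compl] at hb hd
    exact ⟨b, hb, a, ha, d, hd, c, hc, h.2.1, h.1, Or.inr h.2.2⟩
  · obtain ⟨a, ha, b, hb, c, hc, d, hd, h⟩ :=
      exists_crossing_of_notMem hR hR' h₁ h₂.2 h₃.2.2 h₁₂ h₂₃ hmin hmin₂ hp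
    exact ⟨a, ha, b, hb, c, hc, d, hd, h.1, h.2.1, Or.inl h.2.2⟩

end Boundary

/-- Crossing pairs of bases force the two non-crossing pairs: for `a < b < c < d` outside `S`, if
`Sab`, `Sad`, `Sbc` and `Scd` belong to `𝓑`, then so do `Sac` and `Sbd`. -/
def CrossingClosed {n : ℕ} (k : ℕ) (𝓑 : Set (Finset (Fin n))) : Prop :=
  ∀ (S : Finset (Fin n)) (a b c d : Fin n), a < b → b < c → c < d → S.card + 2 = k →
    a ∉ S → b ∉ S → c ∉ S → d ∉ S →
    insert a (insert b S) ∈ 𝓑 → insert a (insert d S) ∈ 𝓑 →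
    insert b (insert c S) ∈ 𝓑 → insert c (insert d S) ∈ 𝓑 →
    insert a (insert c S) ∈ 𝓑 ∧ insert b (insert d S) ∈ 𝓑

/-- The cyclic window of residues modulo `n` of the integers in `[l, m)`. -/
noncomputable def window (n l m : ℕ) : Finset (Fin n) :=
  open Classical in
  Finset.univ.filter fun i => ∃ q, l ≤ q ∧ q < m ∧ q % n = i.val

section CyclicIntervals

variable {n k : ℕ} {𝓑 : Finset (Finset (Fin n))}

theorem mem_window {l m : ℕ} {i : Fin n} :
    i ∈ window n l m ↔ ∃ q, l ≤ q ∧ q < m ∧ q % n = i.val := by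
  simp [window]

theorem card_compl_inter_compl {T F : Finset (Fin n)} :
    (Tᶜ ∩ Fᶜ).card + T.card + F.card = n + (T ∩ F).card := by
  have h1 := Finset.card_compl_add_card (T ∪ F)
  have h2 := Finset.card_union_add_card_inter T F
  rw [Finset.compl_union, Fintype.card_fin] at h1
  omega

theorem Violates.exists_coexchange {M : Matroid (Fin n)} (hE : M.E = Set.univ)
    (hM : ∀ T : Finset (Fin n), M.IsBase ↑T ↔ T ∈ 𝓑) (hk : ∀ T ∈ 𝓑, T.card = k)
    {B F Y : Finset (Fin n)} (hB : B.card = k)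
    (hF : Violates 𝓑 B F) (hYF : Y ⊆ Fᶜ) (hX : ¬ Violates 𝓑 B Yᶜ)
    (hY : ¬ Violates 𝓑 B (Fᶜ \ Y)ᶜ) :
    ∃ T ∈ 𝓑, Saturates 𝓑 T F ∧ ∃ b ∈ Y, ∃ d ∈ Fᶜ \ Y, b ∉ T ∧ d ∈ T ∧
      insert b (T.erase d) ∈ 𝓑 := by
  classical
  have hmem : ∀ T, T ∈ 𝓑.image compl ↔ Tᶜ ∈ 𝓑 := by
    intro T
    simp only [Finset.mem_image]
    exact ⟨fun ⟨T', h, h'⟩ => by rwa [← h', compl_compl], fun h => ⟨_, h, compl_compl T⟩⟩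
  have hM' : ∀ T : Finset (Fin n), M✶.IsBase ↑T ↔ T ∈ 𝓑.image compl := by
    intro T
    rw [Matroid.dual_isBase_iff (by simp [hE]), hmem, ← hM, hE]
    simp [Set.compl_eq_univ_sdiff]
  have hV : ∀ G : Finset (Fin n), Violates (𝓑.image compl) Bᶜ G ↔ Violates 𝓑 B Gᶜ := by
    intro G
    simp only [Violates, Finset.forall_mem_image]
    refine forall₂_congr fun T hT => ?_
    have h1 := card_compl_inter_compl (T := T) (F := Gᶜ)
    have h2 := card_compl_inter_compl (T := B) (F := Gᶜ)
    rw [compl_compl] at h1 h2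
    have := hk T hT
    omega
  obtain ⟨T, hT, hsat, b, hb, d, hd, hbT, hdT, h⟩ := Violates.exists_exchange
    (M := M✶) (by simp [hE]) hM' ((hV Fᶜ).2 (by rwa [compl_compl])) hYF
    (fun h => hX ((hV _).1 h)) (fun h => hY ((hV _).1 h))
  rw [hmem] at hT h
  refine ⟨Tᶜ, hT, fun T' hT' => ?_, b, hb, d, hd, by simpa using hbT, by simpa using hdT, ?_⟩
  · have h1 := hsat T'ᶜ ((hmem _).2 (by rwa [compl_compl]))
    have h2 := card_compl_inter_compl (T := T') (F := F)
    have h3 := card_compl_inter_compl (T := Tᶜ) (F := F)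
    rw [compl_compl] at h3
    have := hk _ hT
    have := hk _ hT'
    omega
  · convert h using 1
    ext x
    by_cases hx : x = b <;> by_cases hx' : x = d <;> simp_all

theorem exists_violates_card_boundary_le (h0 : 𝓑.Nonempty) (hk : ∀ B ∈ 𝓑, B.card = k)
    (hex : ExchangeAxiom n 𝓑) (hP : CrossingClosed k (𝓑 : Set (Finset (Fin n))))
    {B : Finset (Fin n)} (hB : B.card = k) (hB' : B ∉ 𝓑) :
    ∃ F, Violates 𝓑 B F ∧ (boundary F).card ≤ 2 := by
  classical
  obtain ⟨M, hE, hM⟩ := exists_matroid_of_exchangeAxiom h0 hex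
  have hBB : Violates 𝓑 B B := by
    intro T hT
    rw [Finset.inter_self, hB]
    refine lt_of_le_of_ne (hk T hT ▸ Finset.card_le_card Finset.inter_subset_left) fun h => ?_
    have h1 : T ∩ B = T :=
      Finset.eq_of_subset_of_card_le Finset.inter_subset_left (by rw [h, hk T hT])
    have h2 : T = B := Finset.eq_of_subset_of_card_le (Finset.inter_eq_left.1 h1)
      (by rw [hB, hk T hT])
    exact hB' (h2 ▸ hT)
  obtain ⟨F, hF, hmin⟩ := (Finset.univ.filter fun F => Violates 𝓑 B F).exists_min_image
    (fun F => (boundary F).card) ⟨B, by simpa using hBB⟩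
  simp only [Finset.mem_filter, Finset.mem_univ, true_and] at hF hmin
  have hmin' : ∀ G, (boundary G).card < (boundary F).card → ¬ Violates 𝓑 B G :=
    fun G hG h => absurd (hmin G h) (not_le.2 hG)
  refine ⟨F, hF, ?_⟩
  by_contra! h3
  obtain ⟨a, ha, b, hb, c, hc, d, hd, ⟨T, hT, hTs, haT, hcT, hT'⟩,
    ⟨V, hV, hVs, hbV, hdV, hV'⟩, hord⟩ := exists_crossing (F := F)
    (R := fun a c => ∃ T ∈ 𝓑, Saturates 𝓑 T F ∧ a ∈ T ∧ c ∉ T ∧ insert c (T.erase a) ∈ 𝓑)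
    (R' := fun b d => ∃ T ∈ 𝓑, Saturates 𝓑 T F ∧ b ∉ T ∧ d ∈ T ∧ insert b (T.erase d) ∈ 𝓑) h3
    (fun X hX h1 h2 => by
      obtain ⟨T, hT, hs, a, ha, c, hc, h⟩ :=
        hF.exists_exchange hE hM hX (hmin' _ h1) (hmin' _ h2)
      exact ⟨a, ha, c, hc, T, hT, hs, h⟩)
    (fun Y hY h1 h2 => by
      obtain ⟨T, hT, hs, b, hb, d, hd, h⟩ :=
        hF.exists_coexchange hE hM hk hB hY
          (hmin' _ (by rwa [boundary_compl])) (hmin' _ (by rwa [boundary_compl]))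
      exact ⟨b, hb, d, hd, T, hT, hs, h⟩)
  rw [Finset.mem_compl] at hb hd
  have hTs' : Saturates 𝓑 (insert c (T.erase a)) F := by
    intro T' hT'
    refine (hTs T' hT').trans (le_of_eq ?_)
    rw [Finset.insert_inter_of_mem hc, Finset.card_insert_of_notMem (by simp [hcT]),
      Finset.erase_inter, Finset.card_erase_of_mem (by simp [haT, ha])]
    have : 0 < (T ∩ F).card := Finset.card_pos.2 ⟨a, by simp [haT, ha]⟩
    omega
  have hVs' : Saturates 𝓑 (insert b (V.erase d)) F := by
    intro T' hT'
    refine (hVs T' hT').trans (le_of_eq ?_)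
    rw [Finset.insert_inter_of_notMem hb, Finset.erase_inter,
      Finset.erase_eq_of_notMem (by simp [hd])]
  have hac : a ≠ c := fun h => hcT (h ▸ haT)
  have hbd : b ≠ d := fun h => hbV (h ▸ hdV)
  have hab : a ≠ b := fun h => hb (h ▸ ha)
  have had : a ≠ d := fun h => hd (h ▸ ha)
  have hcb : c ≠ b := fun h => hb (h ▸ hc)
  have hcd : c ≠ d := fun h => hd (h ▸ hc)
  obtain ⟨S, hS⟩ : ∃ S, S = (((T ∩ F) ∪ V \ F).erase a).erase d := ⟨_, rfl⟩
  have e1 : insert a (insert d S) ∈ 𝓑 := by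
    convert Saturates.mix hE hM hT hTs hV hVs using 1
    rw [hS]; ext x
    by_cases h1 : x = a <;> by_cases h2 : x = d <;> simp_all
  have e2 : insert a (insert b S) ∈ 𝓑 := by
    convert Saturates.mix hE hM hT hTs hV' hVs' using 1
    rw [hS]; ext x
    by_cases h1 : x = a
    · simp_all
    by_cases h2 : x = d
    · have := hbd.symm
      simp_all
    by_cases h3 : x = b <;> simp_all
  have e3 : insert c (insert d S) ∈ 𝓑 := by
    convert Saturates.mix hE hM hT' hTs' hV hVs using 1
    rw [hS]; ext x
    by_cases h1 : x = a
    · simp_all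
    by_cases h2 : x = d
    · have := hbd.symm
      simp_all
    by_cases h3 : x = c <;> simp_all
  have e4 : insert b (insert c S) ∈ 𝓑 := by
    convert Saturates.mix hE hM hT' hTs' hV' hVs' using 1
    rw [hS]; ext x
    by_cases h1 : x = a
    · simp_all
    by_cases h2 : x = d
    · have := hbd.symm
      have := hcd.symm
      simp_all
    by_cases h3 : x = c
    · simp_all
    by_cases h4 : x = b <;> simp_all
  have haS : a ∉ S := by simp [hS]
  have hdS : d ∉ S := by simp [hS]
  have hcS : c ∉ S := by simp [hS, hcT, hc]
  have hbS : b ∉ S := by simp [hS, hbV, hb]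
  have hSk : S.card + 2 = k := by
    rw [← hk _ e1, Finset.card_insert_of_notMem (by simp [haS, had]),
      Finset.card_insert_of_notMem hdS]
  have hSF : (S ∩ F).card + 1 = (T ∩ F).card := by
    have : S ∩ F = (T ∩ F).erase a := by
      rw [hS]; ext x
      by_cases h1 : x = a <;> by_cases h2 : x = d <;> by_cases h3 : x ∈ F <;> simp_all
    rw [this, Finset.card_erase_of_mem (by simp [haT, ha])]
    have : 0 < (T ∩ F).card := Finset.card_pos.2 ⟨a, by simp [haT, ha]⟩
    omega
  have key : insert a (insert c S) ∉ 𝓑 := by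
    intro h
    have := hTs _ h
    rw [Finset.insert_inter_of_mem ha, Finset.insert_inter_of_mem hc,
      Finset.card_insert_of_notMem (by simp [haS, hac]),
      Finset.card_insert_of_notMem (by simp [hcS])] at this
    omega
  have comm : ∀ x y : Fin n, insert x (insert y S) = insert y (insert x S) :=
    fun x y => Finset.insert_comm x y S
  simp only [CrossingClosed, Finset.mem_coe] at hP
  rcases hord with ⟨h1, h2, h | h⟩ | ⟨h1, h2, h | h⟩
  · exact key (hP S d a b c h h1 h2 hSk hdS haS hbS hcS (comm d a ▸ e1) (comm d c ▸ e3) e2 e4).2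
  · exact key (hP S a b c d h1 h2 h hSk haS hbS hcS hdS e2 e1 e4 e3).1
  · exact key (comm a c ▸ (hP S c b a d h h1 h2 hSk hcS hbS haS hdS (comm c b ▸ e4) e3
      (comm b a ▸ e2) e1).1)
  · exact key (hP S b a d c h1 h2 h hSk hbS haS hdS hcS (comm b a ▸ e2) e4 e1 (comm d c ▸ e3)).2

end CyclicIntervals

section Window

variable {n : ℕ}

theorem window_eq_empty {l m : ℕ} (h : m ≤ l) : window n l m = ∅ := by
  ext i
  simp only [mem_window, Finset.notMem_empty, iff_false]
  rintro ⟨q, h1, h2, -⟩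
  omega

theorem window_zero_self : window n 0 n = Finset.univ := by
  ext i
  simp only [mem_window, Finset.mem_univ, iff_true]
  exact ⟨i, Nat.zero_le _, i.isLt, Nat.mod_eq_of_lt i.isLt⟩

theorem window_mono {l l' m m' : ℕ} (hl : l' ≤ l) (hm : m ≤ m') :
    window n l m ⊆ window n l' m' := by
  intro i
  simp only [mem_window]
  exact fun ⟨q, h1, h2, h3⟩ => ⟨q, by omega, by omega, h3⟩

theorem window_eq_insert_left {l m : ℕ} (h : l < m) {p : Fin n} (hp : l % n = p) :
    window n l m = insert p (window n (l + 1) m) := by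
  ext i
  simp only [mem_window, Finset.mem_insert]
  constructor
  · rintro ⟨q, h1, h2, h3⟩
    rcases Nat.eq_or_lt_of_le h1 with rfl | h1
    · exact Or.inl (Fin.ext (by omega))
    · exact Or.inr ⟨q, h1, h2, h3⟩
  · rintro (rfl | ⟨q, h1, h2, h3⟩)
    · exact ⟨l, le_rfl, h, hp⟩
    · exact ⟨q, by omega, h2, h3⟩

theorem window_succ_right {l m : ℕ} (h : l ≤ m) {p : Fin n} (hp : m % n = p) :
    window n l (m + 1) = insert p (window n l m) := by
  ext i
  simp only [mem_window, Finset.mem_insert]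
  constructor
  · rintro ⟨q, h1, h2, h3⟩
    rcases Nat.eq_or_lt_of_le (Nat.le_of_lt_succ h2) with rfl | h2
    · exact Or.inl (Fin.ext (by omega))
    · exact Or.inr ⟨q, h1, h2, h3⟩
  · rintro (rfl | ⟨q, h1, h2, h3⟩)
    · exact ⟨m, h, by omega, hp⟩
    · exact ⟨q, h1, by omega, h3⟩

theorem window_add_mul (l m t : ℕ) : window n (l + n * t) (m + n * t) = window n l m := by
  ext i
  simp only [mem_window]
  constructor
  · rintro ⟨q, h1, h2, h3⟩
    refine ⟨q - n * t, by omega, by omega, ?_⟩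
    obtain ⟨r, rfl⟩ : ∃ r, q = r + n * t := ⟨q - n * t, by omega⟩
    rw [Nat.add_sub_cancel]
    rwa [Nat.add_mul_mod_self_left] at h3
  · rintro ⟨q, h1, h2, h3⟩
    exact ⟨q + n * t, by omega, by omega, by rwa [Nat.add_mul_mod_self_left]⟩

theorem mem_window_of_le {l m : ℕ} (hm : m ≤ n) {i : Fin n} :
    i ∈ window n l m ↔ l ≤ i.val ∧ i.val < m := by
  rw [mem_window]
  constructor
  · rintro ⟨q, h1, h2, h3⟩
    rw [Nat.mod_eq_of_lt (by omega)] at h3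
    omega
  · exact fun ⟨h1, h2⟩ => ⟨i, h1, h2, Nat.mod_eq_of_lt i.isLt⟩

theorem mem_window_add {l m : ℕ} (hl : l ≤ n) (hm : m ≤ n) {i : Fin n} :
    i ∈ window n l (m + n) ↔ l ≤ i.val ∨ i.val < m := by
  rw [mem_window]
  constructor
  · rintro ⟨q, h1, h2, h3⟩
    rcases lt_or_ge q n with h | h
    · rw [Nat.mod_eq_of_lt h] at h3
      omega
    · rw [Nat.mod_eq_sub_mod h, Nat.mod_eq_of_lt (by omega)] at h3
      omega
  · have := i.isLt
    rintro (h | h)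
    · exact ⟨i, h, by omega, Nat.mod_eq_of_lt i.isLt⟩
    · exact ⟨i + n, by omega, by omega, by rw [Nat.add_mod_right, Nat.mod_eq_of_lt i.isLt]⟩

theorem exists_eq_window {F : Finset (Fin n)} (h : (boundary F).card ≤ 2) :
    ∃ l m, l ≤ m ∧ m ≤ l + n ∧ F = window n l m := by
  classical
  rcases F.eq_empty_or_nonempty with rfl | hF
  · exact ⟨0, 0, le_rfl, Nat.zero_le _, (window_eq_empty le_rfl).symm⟩
  have hn : 0 < n := (Nat.zero_le _).trans_lt hF.choose.isLt
  let o : Fin n := ⟨0, hn⟩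
  rcases (Finset.univ.filter fun i => ¬ (o ∈ F ↔ i ∈ F)).eq_empty_or_nonempty with hZ | hZ
  · refine ⟨0, n, Nat.zero_le _, by omega, ?_⟩
    rw [window_zero_self]
    ext i
    obtain ⟨j, hj⟩ := hF
    rw [Finset.filter_eq_empty_iff] at hZ
    have h1 := hZ (Finset.mem_univ i)
    have h2 := hZ (Finset.mem_univ j)
    simp only [Finset.mem_univ, iff_true]
    tauto
  obtain ⟨u, hu, hu'⟩ := Finset.exists_minimal hZ
  obtain ⟨v, hv, hv'⟩ := Finset.exists_maximal hZ
  simp only [Finset.mem_filter, Finset.mem_univ, true_and] at hu hu' hv hv'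
  have hmem : ∀ i : Fin n, ¬ (o ∈ F ↔ i ∈ F) ↔ u ≤ i ∧ i ≤ v := by
    refine fun i => ⟨fun hi => ⟨(le_total u i).elim id (hu' hi), (le_total i v).elim id (hv' hi)⟩,
      fun ⟨h1, h2⟩ hi => ?_⟩
    have hui : u < i := lt_of_le_of_ne h1 (by rintro rfl; exact hu hi)
    have hiv : i < v := lt_of_le_of_ne h2 (by rintro rfl; exact hv hi)
    have hou : o < u := lt_of_le_of_ne (Nat.zero_le u.val) (by rintro rfl; exact hu Iff.rfl)
    obtain ⟨p, hp, -, hp'⟩ := exists_mem_boundary_of_lt hou hu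
    obtain ⟨q, hq, hq₁, hq₂⟩ := exists_mem_boundary_of_lt (F := F) hui (by tauto)
    obtain ⟨r, hr, hr₁, -⟩ := exists_mem_boundary_of_lt (F := F) hiv (by tauto)
    have h3 : ({p, q, r} : Finset (Fin n)) ⊆ boundary F := by
      simp [Finset.insert_subset_iff, hp, hq, hr]
    have h4 := Finset.card_le_card h3
    have hpq := hp'.trans_le hq₁
    have hqr := hq₂.trans_le hr₁
    rw [Finset.card_eq_three.2 ⟨p, q, r, hpq.ne, (hpq.trans hqr).ne, hqr.ne, rfl⟩] at h4
    omega
  have huv : u ≤ v := ((hmem u).1 hu).2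
  rw [Fin.le_def] at huv
  have := v.isLt
  by_cases ho : o ∈ F
  · refine ⟨v + 1, u + n, by omega, by omega, ?_⟩
    ext i
    have := hmem i
    rw [mem_window_add (by omega) (by omega)]
    simp only [ho, true_iff, Fin.le_def] at this
    rw [← not_iff_not, this]
    omega
  · refine ⟨u, v + 1, by omega, by omega, ?_⟩
    ext i
    have := hmem i
    rw [mem_window_of_le (by omega)]
    simp only [ho, false_iff, Fin.le_def, not_not] at this
    rw [this, Nat.lt_succ_iff]

/-- The function `f` records, for each element `p`, the last position which has to be added to the
elements cyclically following `p` in order to generate `p` under `cl`. -/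
def HasType (cl : Fin n → Finset (Fin n) → Prop) (f : Fin n → ℕ) : Prop :=
  ∀ (p : Fin n) (m : ℕ), p.val < m → m ≤ p + n → (cl p (window n (p + 1) m) ↔ f p < m)

/-- The values over one period of a bounded affine permutation. -/
structure IsBoundedAffine (f : Fin n → ℕ) : Prop where
  le_apply : ∀ p : Fin n, p.val ≤ f p
  apply_le : ∀ p : Fin n, f p ≤ p + n
  injective_mod : ∀ p q : Fin n, f p % n = f q % n → p = q

theorem HasType.iff_of_mod_eq {cl : Fin n → Finset (Fin n) → Prop} {f : Fin n → ℕ}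
    (hf : HasType cl f) {p : Fin n} {l m t : ℕ} (hl : l = p + n * t) (h : l < m) (h' : m ≤ l + n) :
    cl p (window n (l + 1) m) ↔ f p + n * t < m := by
  subst hl
  obtain ⟨m, rfl⟩ : ∃ m', m = m' + n * t := ⟨m - n * t, by omega⟩
  have := hf p m (by omega) (by omega)
  rw [add_right_comm, window_add_mul, this]
  omega

theorem rank_window_eq_of_hasType {cl cl' : Fin n → Finset (Fin n) → Prop} {f : Fin n → ℕ}
    (hf : HasType cl f) (hf' : HasType cl' f) {rk rk' : Finset (Fin n) → ℕ} (h0 : rk ∅ = rk' ∅)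
    (hrk : ∀ p X, cl p X → rk (insert p X) = rk X)
    (hrk₁ : ∀ p X, ¬ cl p X → rk (insert p X) = rk X + 1)
    (hrk' : ∀ p X, cl' p X → rk' (insert p X) = rk' X)
    (hrk₁' : ∀ p X, ¬ cl' p X → rk' (insert p X) = rk' X + 1) {l m : ℕ} (hlm : l ≤ m)
    (hm : m ≤ l + n) : rk (window n l m) = rk' (window n l m) := by
  induction hlm using Nat.decreasingInduction with
  | self => rwa [window_eq_empty le_rfl]
  | of_succ l hl ih =>
    have hn : 0 < n := by omega
    let p : Fin n := ⟨l % n, Nat.mod_lt _ hn⟩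
    have hp : l = p + n * (l / n) := (Nat.mod_add_div l n).symm
    rw [window_eq_insert_left hl (p := p) rfl]
    have h1 := hf.iff_of_mod_eq hp hl hm
    have h2 := hf'.iff_of_mod_eq hp hl hm
    have ih := ih (by omega)
    by_cases h : f p + n * (l / n) < m
    · rw [hrk _ _ (h1.2 h), hrk' _ _ (h2.2 h), ih]
    · rw [hrk₁ _ _ (fun h' => h (h1.1 h')), hrk₁' _ _ (fun h' => h (h2.1 h')), ih]

theorem rank_univ_eq_of_hasType {cl : Fin n → Finset (Fin n) → Prop} {f : Fin n → ℕ}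
    (hf : HasType cl f) {rk : Finset (Fin n) → ℕ} (h0 : rk ∅ = 0)
    (hrk : ∀ p X, cl p X → rk (insert p X) = rk X)
    (hrk₁ : ∀ p X, ¬ cl p X → rk (insert p X) = rk X + 1) :
    rk Finset.univ = (Finset.univ.filter fun p => n ≤ f p).card := by
  have key : ∀ l ≤ n, rk (window n l n) =
      (Finset.univ.filter fun p : Fin n => l ≤ p.val ∧ n ≤ f p).card := by
    intro l hl
    induction hl using Nat.decreasingInduction with
    | self =>
      rw [window_eq_empty le_rfl, h0, eq_comm, Finset.card_eq_zero, Finset.filter_eq_empty_iff]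
      intro p _
      have := p.isLt
      omega
    | of_succ l hl ih =>
      let p : Fin n := ⟨l, hl⟩
      rw [window_eq_insert_left hl (p := p) (Nat.mod_eq_of_lt hl)]
      have h1 : cl p (window n (l + 1) n) ↔ f p < n := hf p n hl (by omega)
      by_cases h : f p < n
      · rw [hrk _ _ (h1.2 h), ih]
        congr 1
        ext q
        simp only [Finset.mem_filter, Finset.mem_univ, true_and]
        refine ⟨fun h => ⟨by omega, h.2⟩, fun h' => ⟨?_, h'.2⟩⟩
        by_contra h''
        have : q = p := Fin.ext (show q.val = l by omega)
        rw [this] at h'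
        omega
      · rw [hrk₁ _ _ (fun h' => h (h1.1 h')), ih, ← Finset.card_insert_of_notMem (a := p)
          (by simp [p])]
        congr 1
        ext q
        simp only [Finset.mem_filter, Finset.mem_univ, true_and, Finset.mem_insert, Fin.ext_iff, p]
        constructor
        · rintro (h' | h')
          · have : q = p := Fin.ext h'
            rw [this]
            exact ⟨le_rfl, by omega⟩
          · exact ⟨by omega, h'.2⟩
        · rintro ⟨h1, h2⟩
          omega
  have h1 := key 0 (Nat.zero_le _)
  rw [window_zero_self] at h1
  simpa using h1

theorem Matroid.exists_hasType (M : Matroid (Fin n)) :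
    ∃ f : Fin n → ℕ, IsBoundedAffine f ∧ HasType (fun p X => p ∈ M.closure ↑X) f := by
  classical
  have hex : ∀ p : Fin n, ∃ m, p.val ≤ m ∧ (m = p + n ∨ p ∈ M.closure ↑(window n (p + 1) (m + 1))) :=
    fun p => ⟨p + n, by omega, Or.inl rfl⟩
  let f : Fin n → ℕ := fun p => Nat.find (hex p)
  have hf : HasType (fun p X => p ∈ M.closure ↑X) f := by
    intro p m hpm hmp
    have h1 := Nat.find_spec (hex p)
    constructor
    · intro h
      obtain ⟨m, rfl⟩ : ∃ m', m = m' + 1 := ⟨m - 1, by omega⟩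
      exact Nat.lt_succ_of_le (Nat.find_min' (hex p) ⟨by omega, Or.inr h⟩)
    · intro h
      rcases h1.2 with h2 | h2
      · have : f p = p + n := h2
        omega
      · refine M.closure_subset_closure ?_ h2
        exact_mod_cast window_mono le_rfl h
  refine ⟨f, ⟨fun p => (Nat.find_spec (hex p)).1,
    fun p => Nat.find_min' (hex p) ⟨by omega, Or.inl rfl⟩, ?_⟩, hf⟩
  have hle : ∀ p, p.val ≤ f p := fun p => (Nat.find_spec (hex p)).1
  have hge : ∀ p, f p ≤ p + n := fun p => Nat.find_min' (hex p) ⟨by omega, Or.inl rfl⟩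
  have key : ∀ (p q : Fin n) (s t m l l' : ℕ), l = p + n * s → l' = q + n * t → l < l' → l' < l + n →
      f p + n * s = m → f q + n * t = m → False := by
    intro p q s t m l l' hl hl' hlt hlt' hp hq
    have hn : 0 < n := by omega
    have h1 := hle q
    have h2 := hge p
    let z : Fin n := ⟨m % n, Nat.mod_lt _ hn⟩
    have hp1 : p ∉ M.closure ↑(window n (l + 1) m) := by
      have := hf.iff_of_mod_eq hl (m := m) (by omega) (by omega)
      rw [this]
      omega
    have hq1 : q ∈ M.closure ↑(window n (l' + 1) (m + 1)) := by
      have := hf.iff_of_mod_eq hl' (m := m + 1) (by omega) (by omega)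
      rw [this]
      omega
    have hz : z ∈ M.closure ↑(window n (l + 1) m) := by
      rcases Nat.eq_or_lt_of_le (show l' ≤ m by omega) with h | h
      · have hzq : z = q := Fin.ext (show m % n = q.val by
          rw [← h, hl', Nat.add_mul_mod_self_left, Nat.mod_eq_of_lt q.isLt])
        rw [window_eq_empty (by omega)] at hq1
        rw [hzq]
        exact M.closure_subset_closure (by simp) hq1
      · have hq2 : q ∉ M.closure ↑(window n (l' + 1) m) := by
          have := hf.iff_of_mod_eq hl' (m := m) (by omega) (by omega)
          rw [this]
          omega
        rw [window_succ_right (by omega) (p := z) rfl, Finset.coe_insert] at hq1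
        have h3 := (M.closure_exchange ⟨hq1, hq2⟩).1
        refine M.closure_subset_closure ?_ h3
        have hq3 : q ∈ window n (l + 1) m := mem_window.2 ⟨l', by omega, h, by
          rw [hl', Nat.add_mul_mod_self_left, Nat.mod_eq_of_lt q.isLt]⟩
        rw [← Finset.coe_insert, Finset.coe_subset]
        exact Finset.insert_subset hq3 (window_mono (by omega) le_rfl)
    rcases Nat.eq_or_lt_of_le (show m ≤ l + n by omega) with h | h
    · have hzp : z = p := Fin.ext (show m % n = p.val by
        rw [h, hl, Nat.add_mod_right, Nat.add_mul_mod_self_left, Nat.mod_eq_of_lt p.isLt])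
      exact hp1 (hzp ▸ hz)
    · have := hf.iff_of_mod_eq hl (m := m + 1) (by omega) (by omega)
      have h4 := this.2 (by omega)
      rw [window_succ_right (by omega) (p := z) rfl, Finset.coe_insert,
        Matroid.closure_insert_eq_of_mem_closure hz] at h4
      exact hp1 h4
  have key' : ∀ p q : Fin n, p.val < q → f p % n ≠ f q % n := by
    intro p q hpq h
    have h1 := hle p
    have h2 := hge p
    have h3 := hle q
    have h4 := hge q
    have := q.isLt
    have h5 := Nat.div_add_mod (f p) n
    have h6 := Nat.div_add_mod (f q) n
    rcases lt_trichotomy (f p / n) (f q / n) with h7 | h7 | h7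
    · rcases Nat.eq_or_lt_of_le (show f p / n + 1 ≤ f q / n from h7) with h8 | h8
      · have : f p + n = f q := by rw [← h8, Nat.mul_add] at h6; omega
        exact key q p 0 1 (f q) q (p + n) (by simp) (by simp) (by omega) (by omega) (by simp)
          (by simpa using this)
      · have : n * (f p / n + 2) ≤ n * (f q / n) := Nat.mul_le_mul_left n h8
        rw [Nat.mul_add] at this
        omega
    · have : f p = f q := by rw [← h5, ← h6, h7, h]
      exact key p q 0 0 (f p) p q (by simp) (by simp) hpq (by omega) (by simp) (by simpa using this.symm)
    · have : n * (f q / n + 1) ≤ n * (f p / n) := Nat.mul_le_mul_left n h7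
      rw [Nat.mul_add] at this
      omega
  intro p q h
  rcases lt_trichotomy p.val q.val with h' | h' | h'
  · exact absurd h (key' p q h')
  · exact Fin.ext h'
  · exact absurd h.symm (key' q p h')

end Window

section Minors

variable {n k : ℕ}

theorem minor_of_card {A : Matrix (Fin k) (Fin n) ℝ} {I : Finset (Fin n)} (h : I.card = k) :
    minor k n A I = (A.submatrix id (I.orderEmbOfFin h)).det := by
  rw [minor, dif_pos h]
  rfl

theorem card_eq_of_minor_ne_zero {A : Matrix (Fin k) (Fin n) ℝ} {I : Finset (Fin n)}
    (h : minor k n A I ≠ 0) : I.card = k := by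
  by_contra h'
  exact h (dif_neg h')

/-- The linear functional sending `v` to the determinant with first column `v`, followed by the
columns of `A` indexed by `R`. -/
noncomputable def cofactor (A : Matrix (Fin (k + 1)) (Fin n) ℝ) (R : Finset (Fin n))
    (hR : R.card = k) : (Fin (k + 1) → ℝ) →ₗ[ℝ] ℝ where
  toFun v := ∑ i : Fin (k + 1),
    (-1) ^ (i : ℕ) * v i * (A.submatrix i.succAbove (R.orderEmbOfFin hR)).det
  map_add' u v := by
    rw [← Finset.sum_add_distrib]
    exact Finset.sum_congr rfl fun i _ => by simp only [Pi.add_apply]; ring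
  map_smul' c v := by
    rw [RingHom.id_apply, smul_eq_mul, Finset.mul_sum]
    exact Finset.sum_congr rfl fun i _ => by simp only [Pi.smul_apply, smul_eq_mul]; ring

theorem cofactor_apply (A : Matrix (Fin (k + 1)) (Fin n) ℝ) (R : Finset (Fin n))
    (hR : R.card = k) (v : Fin (k + 1) → ℝ) :
    cofactor A R hR v = ∑ i : Fin (k + 1),
      (-1) ^ (i : ℕ) * v i * (A.submatrix i.succAbove (R.orderEmbOfFin hR)).det := rfl

theorem cofactor_col_of_mem (A : Matrix (Fin (k + 1)) (Fin n) ℝ) {R : Finset (Fin n)}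
    (hR : R.card = k) {r : Fin n} (hr : r ∈ R) : cofactor A R hR (A.col r) = 0 := by
  obtain ⟨j, rfl⟩ : ∃ j, R.orderEmbOfFin hR j = r := by
    have : r ∈ Set.range (R.orderEmbOfFin hR) := by
      rw [Finset.range_orderEmbOfFin]
      exact hr
    exact this
  let σ : Fin (k + 1) → Fin n := Fin.cons (R.orderEmbOfFin hR j) (R.orderEmbOfFin hR)
  have h : (A.submatrix id σ).det = 0 := by
    refine Matrix.det_zero_of_column_eq (i := 0) (j := j.succ) (Fin.succ_ne_zero j).symm fun i => ?_
    simp [σ]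
  rw [Matrix.det_succ_column_zero] at h
  rw [← h, cofactor_apply]
  rfl

theorem minor_insert (A : Matrix (Fin (k + 1)) (Fin n) ℝ) {R : Finset (Fin n)}
    (hR : R.card = k) {x : Fin n} (hx : x ∉ R) :
    minor (k + 1) n A (insert x R) =
      (-1) ^ (R.filter (· < x)).card * cofactor A R hR (A.col x) := by
  have hc : (insert x R).card = k + 1 := by rw [Finset.card_insert_of_notMem hx, hR]
  let e := (insert x R).orderEmbOfFin hc
  obtain ⟨p, hp⟩ : ∃ p, e p = x := by
    have : x ∈ Set.range e := by
      rw [Finset.range_orderEmbOfFin]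
      simp
    exact this
  have he : (fun j => e (p.succAbove j)) = R.orderEmbOfFin hR := by
    refine Finset.orderEmbOfFin_unique hR (fun j => ?_)
      (e.strictMono.comp (Fin.strictMono_succAbove p))
    have h1 : e (p.succAbove j) ∈ insert x R := Finset.orderEmbOfFin_mem _ hc _
    rcases Finset.mem_insert.1 h1 with h | h
    · exact absurd (e.injective (h.trans hp.symm)) (Fin.succAbove_ne p j)
    · exact h
  have hcard : (R.filter (· < x)).card = p := by
    have : R.filter (· < x) = (Finset.Iio p).map e.toEmbedding := by
      ext y
      simp only [Finset.mem_filter, Finset.mem_map, Finset.mem_Iio]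
      constructor
      · rintro ⟨h1, h2⟩
        obtain ⟨q, hq⟩ : y ∈ Set.range e := by
          rw [Finset.range_orderEmbOfFin]
          simp [h1]
        exact ⟨q, by rwa [← e.lt_iff_lt, hq, hp], hq⟩
      · rintro ⟨q, hq, rfl⟩
        have h1 : e q < x := by rwa [← hp, e.lt_iff_lt]
        have h2 : e q ∈ insert x R := Finset.orderEmbOfFin_mem _ hc _
        exact ⟨(Finset.mem_insert.1 h2).resolve_left h1.ne, h1⟩
    rw [this, Finset.card_map, Fin.card_Iio]
  rw [minor_of_card hc, Matrix.det_succ_column _ p, hcard, cofactor_apply, Finset.mul_sum]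
  refine Finset.sum_congr rfl fun i _ => ?_
  have h1 : (A.submatrix id e).submatrix i.succAbove p.succAbove =
      A.submatrix i.succAbove (R.orderEmbOfFin hR) := by
    rw [← he]
    rfl
  have h2 : (A.submatrix id e) i p = A.col x i := by simp [hp]
  rw [h1, h2]
  ring

theorem minor_ne_zero_iff {A : Matrix (Fin k) (Fin n) ℝ} {I : Finset (Fin n)} (h : I.card = k) :
    minor k n A I ≠ 0 ↔ LinearIndepOn ℝ A.col (I : Set (Fin n)) := by
  rw [minor, dif_pos h, ← isUnit_iff_ne_zero, ← Matrix.isUnit_iff_isUnit_det,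
    ← Matrix.linearIndependent_cols_iff_isUnit, LinearIndepOn]
  exact linearIndependent_equiv' (I.orderIsoOfFin h).toEquiv rfl

theorem span_col_eq_top {A : Matrix (Fin k) (Fin n) ℝ} {I : Finset (Fin n)} (h : I.card = k)
    (hI : LinearIndepOn ℝ A.col (I : Set (Fin n))) :
    Submodule.span ℝ (A.col '' (I : Set (Fin n))) = ⊤ := by
  have := LinearIndependent.span_eq_top_of_card_eq_finrank' hI (by simp [h])
  rwa [Set.image_eq_range]

theorem exchangeAxiom_minors (A : Matrix (Fin k) (Fin n) ℝ) {𝓑 : Finset (Finset (Fin n))}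
    (h𝓑 : ∀ I, I ∈ 𝓑 ↔ minor k n A I ≠ 0) : ExchangeAxiom n 𝓑 := by
  intro B₁ h₁ B₂ h₂ x hx
  rw [h𝓑] at h₁ h₂
  have hc₁ := card_eq_of_minor_ne_zero h₁
  have hc₂ := card_eq_of_minor_ne_zero h₂
  rw [minor_ne_zero_iff hc₁] at h₁
  rw [minor_ne_zero_iff hc₂] at h₂
  rw [Finset.mem_sdiff] at hx
  have hi : LinearIndepOn ℝ A.col ↑(B₁.erase x) := h₁.mono (by simp)
  have h3 : A.col x ∉ Submodule.span ℝ (A.col '' ↑(B₁.erase x)) := by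
    have := (linearIndepOn_insert (s := ↑(B₁.erase x)) (a := x) (f := A.col)
      (K := ℝ) (by simp)).1 (by rwa [← Finset.coe_insert, Finset.insert_erase hx.1])
    exact this.2
  obtain ⟨y, hy, hy'⟩ : ∃ y ∈ B₂, A.col y ∉ Submodule.span ℝ (A.col '' ↑(B₁.erase x)) := by
    by_contra! h
    have h4 : Submodule.span ℝ (A.col '' ↑B₂) ≤ Submodule.span ℝ (A.col '' ↑(B₁.erase x)) := by
      rw [Submodule.span_le]
      rintro _ ⟨y, hy, rfl⟩
      exact h y hy
    rw [span_col_eq_top hc₂ h₂] at h4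
    exact h3 (h4 trivial)
  have hyx : y ≠ x := fun h => hx.2 (h ▸ hy)
  have hye : y ∉ B₁.erase x := fun h => hy' (Submodule.subset_span ⟨y, by exact_mod_cast h, rfl⟩)
  have hy₁ : y ∉ B₁ := fun h => hye (Finset.mem_erase.2 ⟨hyx, h⟩)
  refine ⟨y, Finset.mem_sdiff.2 ⟨hy, hy₁⟩, ?_⟩
  rw [h𝓑, minor_ne_zero_iff]
  · rw [Finset.coe_insert]
    exact hi.insert hy'
  · rw [Finset.card_insert_of_notMem hye, Finset.card_erase_of_mem hx.1]
    have := Finset.card_pos.2 ⟨x, hx.1⟩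
    omega

theorem minor_mul_eq_mul_minor (A : Matrix (Fin (k + 1)) (Fin n) ℝ) {S : Finset (Fin n)}
    (hS : S.card + 1 = k) {p q r : Fin n} (hp : p ∉ S) (hq : q ∉ S) (hr : r ∉ S) (hpr : p ≠ r)
    (hqr : q ≠ r) {t : ℝ} {u : Fin (k + 1) → ℝ} (hu : u ∈ Submodule.span ℝ (A.col '' ↑S))
    (h : A.col q = t • A.col p + u) :
    (-1) ^ (S.filter (· < q)).card * (if r < q then -1 else 1) *
        minor (k + 1) n A (insert q (insert r S)) =
      t * ((-1) ^ (S.filter (· < p)).card * (if r < p then -1 else 1) *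
        minor (k + 1) n A (insert p (insert r S))) := by
  have hR : (insert r S).card = k := by rw [Finset.card_insert_of_notMem hr, hS]
  have hu0 : cofactor A _ hR u = 0 := by
    have : Submodule.span ℝ (A.col '' ↑S) ≤ LinearMap.ker (cofactor A _ hR) := by
      rw [Submodule.span_le]
      rintro _ ⟨s, hs, rfl⟩
      exact cofactor_col_of_mem A hR (Finset.mem_insert_of_mem (by exact_mod_cast hs))
    exact this hu
  have key : ∀ x : Fin n, x ∉ S → x ≠ r → (-1) ^ (S.filter (· < x)).card *
      (if r < x then -1 else 1) * minor (k + 1) n A (insert x (insert r S)) =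
      cofactor A _ hR (A.col x) := by
    intro x hx hxr
    rw [minor_insert A hR (by simp [hx, hxr]), Finset.filter_insert]
    have h1 : ((-1 : ℝ) ^ (S.filter (· < x)).card) ^ 2 = 1 := by
      rw [← pow_mul, mul_comm, pow_mul]
      simp
    split_ifs with hrx
    · rw [Finset.card_insert_of_notMem (by simp [hr])]
      linear_combination (cofactor A _ hR (A.col x)) * h1
    · linear_combination (cofactor A _ hR (A.col x)) * h1
  rw [key q hq hqr, key p hp hpr, h, map_add, map_smul, hu0, add_zero, smul_eq_mul]

theorem exists_col_eq_smul_add {A : Matrix (Fin (k + 1)) (Fin n) ℝ} {S : Finset (Fin n)}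
    (hS : S.card + 1 = k) {p q r : Fin n} (hp : p ∉ S) (hq : q ∉ S) (hpq : p ≠ q)
    (hpr : minor (k + 1) n A (insert p (insert r S)) ≠ 0)
    (h : minor (k + 1) n A (insert p (insert q S)) = 0) :
    ∃ t : ℝ, ∃ u ∈ Submodule.span ℝ (A.col '' ↑S), A.col q = t • A.col p + u := by
  have h1 := (minor_ne_zero_iff (card_eq_of_minor_ne_zero hpr)).1 hpr
  have h2 : LinearIndepOn ℝ A.col ↑(insert p S) := h1.mono (by
    simp only [Finset.coe_insert]
    exact Set.insert_subset_insert (Set.subset_insert _ _))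
  have hc : (insert p (insert q S)).card = k + 1 := by
    rw [Finset.card_insert_of_notMem (by simp [hp, hpq]), Finset.card_insert_of_notMem hq, hS]
  have h3 : A.col q ∈ Submodule.span ℝ (A.col '' ↑(insert p S)) := by
    by_contra h4
    have h5 := h2.insert h4
    rw [← Finset.coe_insert, Finset.insert_comm] at h5
    exact (minor_ne_zero_iff hc).2 h5 h
  rw [Finset.coe_insert, Set.image_insert_eq, Submodule.mem_span_insert] at h3
  obtain ⟨t, u, hu, h⟩ := h3
  exact ⟨t, u, hu, h⟩

theorem IsPositroid.crossingClosed {𝓑 : Set (Finset (Fin n))} (h : IsPositroid n k 𝓑) :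
    CrossingClosed k 𝓑 := by
  obtain ⟨A, -, hA, h𝓑⟩ := h
  intro S a b c d hab hbc hcd hSk ha hb hc hd h₁ h₂ h₃ h₄
  obtain ⟨k, rfl⟩ : ∃ k', k = k' + 1 := ⟨k - 1, by omega⟩
  have hS : S.card + 1 = k := by omega
  have hcard : ∀ x y : Fin n, x ∉ S → y ∉ S → x ≠ y → (insert x (insert y S)).card = k + 1 := by
    intro x y hx hy hxy
    rw [Finset.card_insert_of_notMem (by simp [hx, hxy]), Finset.card_insert_of_notMem hy, hS]
  have hac := hab.trans hbc
  have hbd := hbc.trans hcd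
  have had := hab.trans hbd
  rw [h𝓑 _ (hcard _ _ ha hb hab.ne)] at h₁
  rw [h𝓑 _ (hcard _ _ ha hd had.ne)] at h₂
  rw [h𝓑 _ (hcard _ _ hb hc hbc.ne)] at h₃
  rw [h𝓑 _ (hcard _ _ hc hd hcd.ne)] at h₄
  rw [h𝓑 _ (hcard _ _ ha hc hac.ne), h𝓑 _ (hcard _ _ hb hd hbd.ne)]
  have g₁ := (hA _).lt_of_ne' h₁
  have g₂ := (hA _).lt_of_ne' h₂
  have g₃ := (hA _).lt_of_ne' h₃
  have g₄ := (hA _).lt_of_ne' h₄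
  have contra : ∀ x y X Y Z W t : ℝ, 0 < X → 0 < Y → 0 < Z → 0 < W → x = 1 ∨ x = -1 →
      y = 1 ∨ y = -1 → x * X = t * (y * Y) → x * Z = - (t * (y * W)) → False := by
    intro x y X Y Z W t hX hY hZ hW hx hy h h'
    have hxx : x * x = 1 := by rcases hx with rfl | rfl <;> norm_num
    have hyy : y * y = 1 := by rcases hy with rfl | rfl <;> norm_num
    have h1 : X * Z + t ^ 2 * Y * W = 0 := by
      linear_combination x * Z * h + t * y * Y * h' - X * Z * hxx - t ^ 2 * Y * W * hyy
    have := mul_pos hX hZ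
    have := mul_pos hY hW
    nlinarith [sq_nonneg t]
  constructor
  · intro h0
    obtain ⟨t, u, hu, h⟩ := exists_col_eq_smul_add hS ha hc hac.ne h₁ h0
    have e1 := minor_mul_eq_mul_minor A hS ha hc hb hab.ne hbc.ne' hu h
    have e2 := minor_mul_eq_mul_minor A hS ha hc hd had.ne hcd.ne hu h
    rw [if_pos hbc, if_neg hab.not_gt, Finset.insert_comm] at e1
    rw [if_neg hcd.not_gt, if_neg had.not_gt] at e2
    exact contra _ _ _ _ _ _ t g₄ g₂ g₃ g₁ (neg_one_pow_eq_or ℝ _) (neg_one_pow_eq_or ℝ _)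
      (by simpa using e2) (by linear_combination -e1)
  · intro h0
    rw [Finset.insert_comm] at h₁ g₁ h₂ g₂ h₄ g₄
    obtain ⟨t, u, hu, h⟩ := exists_col_eq_smul_add hS hb hd hbd.ne h₁ h0
    have e1 := minor_mul_eq_mul_minor A hS hb hd ha hab.ne' had.ne' hu h
    have e2 := minor_mul_eq_mul_minor A hS hb hd hc hbc.ne hcd.ne' hu h
    rw [if_pos had, if_pos hab] at e1
    rw [if_pos hcd, if_neg hbc.not_gt] at e2
    exact contra ((-1) ^ (S.filter (· < d)).card) ((-1) ^ (S.filter (· < b)).card) _ _ _ _ t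
      g₂ g₁ g₄ g₃ (neg_one_pow_eq_or ℝ _) (neg_one_pow_eq_or ℝ _)
      (by linear_combination -e1) (by linear_combination -e2)

end Minors

section Faces

variable {n k : ℕ} {𝓑 : Finset (Finset (Fin n))}

theorem sum_mul_ind_s7 (w : Fin n → ℝ) (T : Finset (Fin n)) :
    ∑ i, w i * ind n T i = ∑ i ∈ T, w i := by
  simp [ind, mul_ite]

theorem isLinearMap_sum_mul (w : Fin n → ℝ) :
    IsLinearMap ℝ fun x : Fin n → ℝ => ∑ i, w i * x i where
  map_add x y := by simp [mul_add, Finset.sum_add_distrib]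
  map_smul c x := by
    simp only [Pi.smul_apply, smul_eq_mul, Finset.mul_sum]
    exact Finset.sum_congr rfl fun i _ => by ring

theorem ind_mem_polytopeOf_iff {T : Finset (Fin n)} : ind n T ∈ polytopeOf n 𝓑 ↔ T ∈ 𝓑 := by
  refine ⟨fun h => ?_, fun h => subset_convexHull ℝ _ ⟨T, h, rfl⟩⟩
  by_contra hT
  let w : Fin n → ℝ := fun i => if i ∈ T then 1 else -1
  have hw : ∀ B : Finset (Fin n), ∑ i, w i * ind n B i = (B ∩ T).card - ((B \ T).card : ℝ) := by
    intro B
    rw [sum_mul_ind_s7, Finset.sum_ite, Finset.filter_mem_eq_inter, Finset.filter_notMem_eq_sdiff]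
    simp [sub_eq_add_neg]
  have hsub : polytopeOf n 𝓑 ⊆ {x | ∑ i, w i * x i < T.card} := by
    refine convexHull_min ?_ (convex_halfSpace_lt (isLinearMap_sum_mul w) _)
    rintro _ ⟨B, hB, rfl⟩
    rw [Set.mem_ofPred_eq, hw]
    have h1 : (B ∩ T).card < T.card + (B \ T).card := by
      rcases (B \ T).eq_empty_or_nonempty with h2 | h2
      · have hBT : B ⊆ T := Finset.sdiff_eq_empty_iff_subset.1 h2
        have h3 : B ≠ T := fun h => hT (h ▸ hB)
        have := Finset.card_lt_card (hBT.ssubset_of_ne h3)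
        rw [Finset.inter_eq_left.2 hBT]
        omega
      · have := Finset.card_pos.2 h2
        have := Finset.card_le_card (Finset.inter_subset_right (s₁ := B) (s₂ := T))
        omega
    have : ((B ∩ T).card : ℝ) < T.card + (B \ T).card := by exact_mod_cast h1
    linarith
  have := hsub h
  rw [Set.mem_ofPred_eq, hw] at this
  simp at this

/-- The members of `𝓑` of maximal weight. -/
noncomputable def maximizers (𝓑 : Finset (Finset (Fin n))) (w : Fin n → ℝ) :
    Finset (Finset (Fin n)) :=
  open Classical in
  𝓑.filter fun B => ∀ B' ∈ 𝓑, ∑ i ∈ B', w i ≤ ∑ i ∈ B, w i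

theorem mem_maximizers {w : Fin n → ℝ} {B : Finset (Fin n)} :
    B ∈ maximizers 𝓑 w ↔ B ∈ 𝓑 ∧ ∀ B' ∈ 𝓑, ∑ i ∈ B', w i ≤ ∑ i ∈ B, w i := by
  simp [maximizers]

theorem maximizers_nonempty (h0 : 𝓑.Nonempty) (w : Fin n → ℝ) : (maximizers 𝓑 w).Nonempty := by
  obtain ⟨B, hB, h⟩ := 𝓑.exists_max_image (fun B => ∑ i ∈ B, w i) h0
  exact ⟨B, mem_maximizers.2 ⟨hB, h⟩⟩

theorem face_eq_polytopeOf_maximizers (h0 : 𝓑.Nonempty) (w : Fin n → ℝ) :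
    {x ∈ polytopeOf n 𝓑 | ∀ y ∈ polytopeOf n 𝓑, ∑ i, w i * y i ≤ ∑ i, w i * x i} =
      polytopeOf n (maximizers 𝓑 w) := by
  obtain ⟨B₀, hB₀⟩ := maximizers_nonempty h0 w
  obtain ⟨h1, h2⟩ := mem_maximizers.1 hB₀
  have hlin := isLinearMap_sum_mul w
  have hle : ∀ x ∈ polytopeOf n 𝓑, ∑ i, w i * x i ≤ ∑ i ∈ B₀, w i := by
    refine convexHull_min (t := {x : Fin n → ℝ | ∑ i, w i * x i ≤ ∑ i ∈ B₀, w i}) ?_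
      (convex_halfSpace_le hlin _)
    rintro _ ⟨B, hB, rfl⟩
    rw [Set.mem_ofPred_eq, sum_mul_ind_s7]
    exact h2 B hB
  have hge : ∀ x ∈ polytopeOf n (maximizers 𝓑 w), ∑ i ∈ B₀, w i ≤ ∑ i, w i * x i := by
    refine convexHull_min (t := {x : Fin n → ℝ | ∑ i ∈ B₀, w i ≤ ∑ i, w i * x i}) ?_
      (convex_halfSpace_ge hlin _)
    rintro _ ⟨B, hB, rfl⟩
    rw [Set.mem_ofPred_eq, sum_mul_ind_s7]
    exact (mem_maximizers.1 hB).2 B₀ h1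
  have hsub : polytopeOf n (maximizers 𝓑 w) ⊆ polytopeOf n 𝓑 :=
    convexHull_mono (Set.image_mono fun B hB => (mem_maximizers.1 hB).1)
  have hcases : ∀ x ∈ polytopeOf n 𝓑,
      x ∈ polytopeOf n (maximizers 𝓑 w) ∨ ∑ i, w i * x i < ∑ i ∈ B₀, w i := by
    refine convexHull_min (t := {x | x ∈ polytopeOf n (maximizers 𝓑 w) ∨
      ∑ i, w i * x i < ∑ i ∈ B₀, w i}) ?_ ?_
    · rintro _ ⟨B, hB, rfl⟩
      rw [Set.mem_ofPred_eq, ind_mem_polytopeOf_iff, sum_mul_ind_s7, mem_maximizers]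
      by_cases h : ∑ i ∈ B, w i < ∑ i ∈ B₀, w i
      · exact Or.inr h
      · exact Or.inl ⟨hB, fun B' hB' => (h2 B' hB').trans (not_lt.1 h)⟩
    · rw [convex_iff_forall_pos]
      intro x hx y hy s t hs ht hst
      have h3 : ∀ z, z ∈ polytopeOf n (maximizers 𝓑 w) ∨ ∑ i, w i * z i < ∑ i ∈ B₀, w i →
          ∑ i, w i * z i ≤ ∑ i ∈ B₀, w i := by
        rintro z (hz | hz)
        · exact hle z (hsub hz)
        · exact hz.le
      have h4 := h3 x hx
      have h5 := h3 y hy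
      have h6 := hlin.map_add (s • x) (t • y)
      rw [hlin.map_smul s x, hlin.map_smul t y] at h6
      simp only [smul_eq_mul] at h6
      have h7 : (∑ i ∈ B₀, w i) = s * ∑ i ∈ B₀, w i + t * ∑ i ∈ B₀, w i := by
        rw [← add_mul, hst, one_mul]
      rcases hx with hx | hx
      · rcases hy with hy | hy
        · exact Or.inl ((convex_convexHull ℝ _) hx hy hs.le ht.le hst)
        · right
          rw [h6, h7]
          exact add_lt_add_of_le_of_lt (mul_le_mul_of_nonneg_left h4 hs.le)
            (mul_lt_mul_of_pos_left hy ht)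
      · right
        rw [h6, h7]
        exact add_lt_add_of_lt_of_le (mul_lt_mul_of_pos_left hx hs)
          (mul_le_mul_of_nonneg_left h5 ht.le)
  ext x
  constructor
  · rintro ⟨hx, hmax⟩
    refine (hcases x hx).resolve_right (not_lt.2 ?_)
    rw [← sum_mul_ind_s7]
    exact hmax _ (ind_mem_polytopeOf_iff.2 h1)
  · exact fun hx => ⟨hsub hx, fun y hy => (hle y hy).trans (hge x hx)⟩

theorem ExchangeAxiom.exists_symm_exchange (hex : ExchangeAxiom n 𝓑) {B₁ B₂ : Finset (Fin n)}
    (h₁ : B₁ ∈ 𝓑) (h₂ : B₂ ∈ 𝓑) {x : Fin n} (hx : x ∈ B₁ \ B₂) :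
    ∃ y ∈ B₂ \ B₁, insert y (B₁.erase x) ∈ 𝓑 ∧ insert x (B₂.erase y) ∈ 𝓑 := by
  obtain ⟨M, hE, hM⟩ := exists_matroid_of_exchangeAxiom ⟨B₁, h₁⟩ hex
  rw [Finset.mem_sdiff] at hx
  rw [← hM] at h₁ h₂
  have hxE : x ∈ M.E := by simp [hE]
  have hx₂ : x ∉ (B₂ : Set (Fin n)) := by simpa using hx.2
  have hC := h₂.fundCircuit_isCircuit hxE hx₂
  have hxC := M.mem_fundCircuit x B₂
  have hcl : x ∉ M.closure (B₁ \ {x}) := h₁.indep.notMem_closure_sdiff_of_mem (by simpa using hx.1)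
  obtain ⟨y, hy, hy'⟩ : ∃ y ∈ M.fundCircuit x B₂ \ {x}, y ∉ M.closure (B₁ \ {x}) := by
    by_contra! h
    exact hcl (M.closure_subset_closure_of_subset_closure h (hC.mem_closure_sdiff_singleton_of_mem hxC))
  have hyx : y ≠ x := hy.2
  have hyB₂ : y ∈ B₂ := by
    have := M.fundCircuit_subset_insert x B₂ hy.1
    simpa [hyx] using this
  have hyB₁ : y ∉ B₁ := fun h => hy' (M.subset_closure _ (by simp [hE]) (by simp [h, hyx]))
  refine ⟨y, by simp [hyB₁, hyB₂], ?_, ?_⟩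
  · rw [← hM, Finset.coe_insert, Finset.coe_erase]
    refine h₁.exchange_isBase_of_indep (by simpa using hyB₁) ?_
    rw [(h₁.indep.subset Set.sdiff_subset).insert_indep_iff]
    exact Or.inl ⟨by simp [hE], hy'⟩
  · rw [← hM, Finset.coe_insert, Finset.coe_erase]
    refine h₂.exchange_isBase_of_indep hx₂ ?_
    have := (h₂.indep.mem_fundCircuit_iff (by rw [h₂.closure_eq]; exact hxE) hx₂).1 hy.1
    rwa [← Set.insert_sdiff_singleton_comm hyx.symm] at this

theorem sum_insert_erase (w : Fin n → ℝ) {B : Finset (Fin n)} {x y : Fin n} (hx : x ∈ B)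
    (hy : y ∉ B) : ∑ i ∈ insert y (B.erase x), w i = ∑ i ∈ B, w i + w y - w x := by
  rw [Finset.sum_insert (by simp [hy]), Finset.sum_erase_eq_sub hx]
  ring

theorem exchangeAxiom_maximizers (hex : ExchangeAxiom n 𝓑) (w : Fin n → ℝ) :
    ExchangeAxiom n (maximizers 𝓑 w) := by
  intro B₁ h₁ B₂ h₂ x hx
  rw [mem_maximizers] at h₁ h₂
  obtain ⟨y, hy, hy₁, hy₂⟩ := hex.exists_symm_exchange h₁.1 h₂.1 hx
  refine ⟨y, hy, mem_maximizers.2 ⟨hy₁, fun B' hB' => (h₁.2 B' hB').trans ?_⟩⟩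
  have h3 := h₂.2 _ hy₂
  rw [Finset.mem_sdiff] at hx hy
  rw [sum_insert_erase w hy.1 hx.2] at h3
  rw [sum_insert_erase w hx.1 hy.2]
  linarith

theorem CrossingClosed.maximizers (hP : CrossingClosed k (𝓑 : Set (Finset (Fin n))))
    (w : Fin n → ℝ) : CrossingClosed k (maximizers 𝓑 w : Set (Finset (Fin n))) := by
  intro S a b c d hab hbc hcd hSk ha hb hc hd h₁ h₂ h₃ h₄
  simp only [Finset.mem_coe, mem_maximizers] at *
  obtain ⟨h₅, h₆⟩ := hP S a b c d hab hbc hcd hSk ha hb hc hd h₁.1 h₂.1 h₃.1 h₄.1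
  simp only [Finset.mem_coe] at h₅ h₆
  have hsum : ∀ x y : Fin n, x ∉ S → y ∉ S → x ≠ y →
      ∑ i ∈ insert x (insert y S), w i = w x + (w y + ∑ i ∈ S, w i) := by
    intro x y hx hy hxy
    rw [Finset.sum_insert (by simp [hx, hxy]), Finset.sum_insert hy]
  have e₁ := hsum a b ha hb hab.ne
  have e₂ := hsum c d hc hd hcd.ne
  have e₃ := hsum a c ha hc (hab.trans hbc).ne
  have e₄ := hsum b d hb hd (hbc.trans hcd).ne
  refine ⟨⟨h₅, fun B' hB' => (h₁.2 B' hB').trans ?_⟩, ⟨h₆, fun B' hB' => (h₁.2 B' hB').trans ?_⟩⟩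
  · have := h₄.2 _ h₆
    linarith
  · have := h₄.2 _ h₅
    linarith

theorem isFaceOf_crossing (hk : ∀ B ∈ 𝓑, B.card = k) {S : Finset (Fin n)} {a b c d : Fin n}
    (hab : a ≠ b) (hac : a ≠ c) (had : a ≠ d) (hbc : b ≠ c) (hbd : b ≠ d) (hcd : c ≠ d)
    (hSk : S.card + 2 = k) (ha : a ∉ S) (hb : b ∉ S) (hc : c ∉ S) (hd : d ∉ S)
    (h₁ : insert a (insert b S) ∈ 𝓑) (h₂ : insert a (insert d S) ∈ 𝓑)
    (h₃ : insert b (insert c S) ∈ 𝓑) (h₄ : insert c (insert d S) ∈ 𝓑)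
    (h₅ : insert a (insert c S) ∉ 𝓑) :
    IsFaceOf n (polytopeOf n 𝓑) (polytopeOf n {insert a (insert b S), insert a (insert d S),
      insert b (insert c S), insert c (insert d S)}) := by
  let δ : Fin n → Finset (Fin n) → ℕ := fun x T => if x ∈ T then 1 else 0
  let w : Fin n → ℝ := fun i => 10 * (if i ∈ S then 1 else 0) + 2 * (if i = a then 1 else 0) +
    2 * (if i = c then 1 else 0) + (if i = b then 1 else 0) + (if i = d then 1 else 0)
  have hw : ∀ T : Finset (Fin n), ∑ i ∈ T, w i =
      ((10 * (T ∩ S).card + 2 * δ a T + 2 * δ c T + δ b T + δ d T : ℕ) : ℝ) := by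
    intro T
    simp [w, δ, Finset.sum_add_distrib]
    ring
  have hsub : ∀ x y : Fin n, ∀ T ∈ 𝓑, x ∉ S → y ∉ S → x ≠ y → S ⊆ T → x ∈ T → y ∈ T →
      T = insert x (insert y S) := by
    intro x y T hT hx hy hxy hST hxT hyT
    refine (Finset.eq_of_subset_of_card_le (s := insert x (insert y S)) (t := T) ?_ ?_).symm
    · simp [Finset.insert_subset_iff, hxT, hyT, hST]
    · rw [hk T hT, Finset.card_insert_of_notMem (by simp [hx, hxy]), Finset.card_insert_of_notMem hy]
      omega
  have hcard : ∀ T ∈ 𝓑, (T ∩ S).card + δ a T + δ b T + δ c T + δ d T ≤ k := by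
    intro T hT
    have : (T ∩ S).card + δ a T + δ b T + δ c T + δ d T = ∑ i ∈ T, ((if i ∈ S then 1 else 0) +
        (if i = a then 1 else 0) + (if i = b then 1 else 0) + (if i = c then 1 else 0) +
        (if i = d then 1 else 0)) := by
      simp [δ, Finset.sum_add_distrib]
    rw [this, ← hk T hT, Finset.card_eq_sum_ones T]
    refine Finset.sum_le_sum fun i _ => ?_
    by_cases hiS : i ∈ S
    · have hne : ∀ x ∉ S, i ≠ x := fun x hx h => hx (h ▸ hiS)
      simp [hiS, hne a ha, hne b hb, hne c hc, hne d hd]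
    · simp only [hiS, if_false]
      by_cases h₁ : i = a
      · simp [h₁, hab, hac, had]
      · by_cases h₂ : i = b
        · simp [h₂, hab.symm, hbc, hbd]
        · by_cases h₃ : i = c
          · simp [h₃, hac.symm, hbc.symm, hcd]
          · simp only [h₁, h₂, h₃, if_false]
            split_ifs <;> simp
  have key : ∀ T ∈ 𝓑, 10 * (T ∩ S).card + 2 * δ a T + 2 * δ c T + δ b T + δ d T ≤
      10 * S.card + 3 ∧ (10 * S.card + 3 ≤
      10 * (T ∩ S).card + 2 * δ a T + 2 * δ c T + δ b T + δ d T →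
      T = insert a (insert b S) ∨ T = insert a (insert d S) ∨ T = insert b (insert c S) ∨
      T = insert c (insert d S)) := by
    intro T hT
    have h1 := hcard T hT
    have hδ : ∀ x, δ x T ≤ 1 := fun x => by simp only [δ]; split_ifs <;> omega
    have hδ' : ∀ x, 0 < δ x T → x ∈ T := fun x hx => by
      by_contra h
      simp [δ, h] at hx
    have := hδ a
    have := hδ b
    have := hδ c
    have := hδ d
    by_cases hST : S ⊆ T
    · rw [Finset.inter_eq_right.2 hST] at h1 ⊢
      have hnot : ¬ (0 < δ a T ∧ 0 < δ c T) := by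
        rintro ⟨h2, h3⟩
        exact h₅ (hsub a c T hT ha hc hac hST (hδ' a h2) (hδ' c h3) ▸ hT)
      refine ⟨by omega, fun h2 => ?_⟩
      rcases (show (0 < δ a T ∧ 0 < δ b T) ∨ (0 < δ a T ∧ 0 < δ d T) ∨ (0 < δ b T ∧ 0 < δ c T) ∨
        (0 < δ c T ∧ 0 < δ d T) by omega) with h | h | h | h
      · exact Or.inl (hsub a b T hT ha hb hab hST (hδ' _ h.1) (hδ' _ h.2))
      · exact Or.inr (Or.inl (hsub a d T hT ha hd had hST (hδ' _ h.1) (hδ' _ h.2)))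
      · exact Or.inr (Or.inr (Or.inl (hsub b c T hT hb hc hbc hST (hδ' _ h.1) (hδ' _ h.2))))
      · exact Or.inr (Or.inr (Or.inr (hsub c d T hT hc hd hcd hST (hδ' _ h.1) (hδ' _ h.2))))
    · have h2 : (T ∩ S).card < S.card := Finset.card_lt_card
        (Finset.inter_subset_right.ssubset_of_ne fun h => hST (Finset.inter_eq_right.1 h))
      exact ⟨by omega, fun h => by omega⟩
  have hval : ∀ T, T = insert a (insert b S) ∨ T = insert a (insert d S) ∨
      T = insert b (insert c S) ∨ T = insert c (insert d S) →
      T ∈ 𝓑 ∧ 10 * S.card + 3 = 10 * (T ∩ S).card + 2 * δ a T + 2 * δ c T + δ b T + δ d T := by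
    have hi : ∀ x y : Fin n, insert x (insert y S) ∩ S = S := fun x y =>
      Finset.inter_eq_right.2 ((Finset.subset_insert _ _).trans (Finset.subset_insert _ _))
    rintro T (rfl | rfl | rfl | rfl)
    · refine ⟨h₁, ?_⟩
      simp [δ, hi, hac.symm, hbc.symm, had.symm, hbd.symm, hc, hd]
    · refine ⟨h₂, ?_⟩
      simp [δ, hi, hac.symm, hcd, hab.symm, hbd, hc, hb]
    · refine ⟨h₃, ?_⟩
      simp [δ, hi, hab, hac, hbd.symm, hcd.symm, ha, hd]
    · refine ⟨h₄, ?_⟩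
      simp [δ, hi, hac, had, hbc, hbd, ha, hb]
  refine ⟨w, ?_⟩
  rw [face_eq_polytopeOf_maximizers ⟨_, h₁⟩]
  congr 1
  ext T
  simp only [Finset.mem_insert, Finset.mem_singleton, mem_maximizers, hw, Nat.cast_le]
  constructor
  · intro h
    exact ⟨(hval T h).1, fun B' hB' => (hval T h).2 ▸ (key B' hB').1⟩
  · rintro ⟨h, h'⟩
    refine (key T h).2 ?_
    rw [(hval _ (Or.inl rfl)).2]
    exact h' _ h₁

theorem finrank_direction_crossing {S : Finset (Fin n)} {a b c d : Fin n}
    (hab : a ≠ b) (hac : a ≠ c) (had : a ≠ d) (hbc : b ≠ c) (hbd : b ≠ d) (hcd : c ≠ d)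
    (ha : a ∉ S) (hb : b ∉ S) (hc : c ∉ S) (hd : d ∉ S) :
    Module.finrank ℝ (affineSpan ℝ
      (convexHull ℝ {ind n (insert a (insert b S)), ind n (insert a (insert d S)),
        ind n (insert b (insert c S)), ind n (insert c (insert d S))} :
          Set (Fin n → ℝ))).direction = 2 := by
  have hind : ∀ x y : Fin n, x ∉ S → y ∉ S → x ≠ y → ind n (insert x (insert y S)) =
      Pi.single x 1 + Pi.single y 1 + ind n S := by
    intro x y hx hy hxy
    ext i
    simp only [ind, Finset.mem_insert, Pi.add_apply, Pi.single_apply]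
    by_cases h1 : i = x
    · subst h1; simp [hx, hxy]
    · by_cases h2 : i = y
      · subst h2; simp [hy, h1]
      · simp [h1, h2]
  let u : Fin n → ℝ := Pi.single d 1 - Pi.single b 1
  let v : Fin n → ℝ := Pi.single c 1 - Pi.single a 1
  rw [affineSpan_convexHull, direction_affineSpan, vectorSpan_eq_span_vsub_set_right ℝ
    (Set.mem_insert (ind n (insert a (insert b S))) _)]
  have hspan : Submodule.span ℝ ((· -ᵥ ind n (insert a (insert b S))) ''
      ({ind n (insert a (insert b S)), ind n (insert a (insert d S)),
        ind n (insert b (insert c S)), ind n (insert c (insert d S))} : Set (Fin n → ℝ))) =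
      Submodule.span ℝ (Set.range ![u, v]) := by
    simp only [Set.image_insert_eq, Set.image_singleton, vsub_eq_sub, hind _ _ ha hb hab,
      hind _ _ ha hd had, hind _ _ hb hc hbc, hind _ _ hc hd hcd, Matrix.range_cons,
      Matrix.range_empty, Set.union_empty, Set.singleton_union]
    have hu : u ∈ Submodule.span ℝ {u, v} := Submodule.subset_span (by simp)
    have hv : v ∈ Submodule.span ℝ {u, v} := Submodule.subset_span (by simp)
    apply le_antisymm
    · rw [Submodule.span_le]
      rintro x (rfl | rfl | rfl | rfl)
      · simp
      · rw [SetLike.mem_coe]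
        convert hu using 1
        simp only [u]; abel
      · rw [SetLike.mem_coe]
        convert hv using 1
        simp only [v]; abel
      · rw [SetLike.mem_coe]
        convert add_mem hu hv using 1
        simp only [u, v]; abel
    · refine Submodule.span_mono ?_
      rintro x (rfl | rfl)
      · right; left
        simp only [u]; abel
      · right; right; left
        simp only [v]; abel
  rw [hspan, finrank_span_eq_card, Fintype.card_fin]
  rw [LinearIndependent.pair_iff]
  intro s t h
  have hd' := congrFun h d
  have hc' := congrFun h c
  simp [u, v, hbd.symm, hcd, hcd.symm, had.symm, hac.symm, hbc.symm] at hd' hc'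
  exact ⟨hd', hc'⟩

theorem image_ind_crossing {S : Finset (Fin n)} {a b c d : Fin n} :
    polytopeOf n {insert a (insert b S), insert a (insert d S),
      insert b (insert c S), insert c (insert d S)} =
      convexHull ℝ {ind n (insert a (insert b S)), ind n (insert a (insert d S)),
        ind n (insert b (insert c S)), ind n (insert c (insert d S))} := by
  simp [polytopeOf, Set.image_insert_eq]

theorem exists_crossing_face (hk : ∀ B ∈ 𝓑, B.card = k)
    (hP : ¬ CrossingClosed k (𝓑 : Set (Finset (Fin n)))) :
    ∃ a b c d : Fin n, a < b ∧ b < c ∧ c < d ∧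
      ∃ S : Finset (Fin n), S.card + 2 = k ∧ a ∉ S ∧ b ∉ S ∧ c ∉ S ∧ d ∉ S ∧
        IsFaceOf n (polytopeOf n 𝓑) (polytopeOf n {insert a (insert b S), insert a (insert d S),
          insert b (insert c S), insert c (insert d S)}) := by
  simp only [CrossingClosed, not_forall, Finset.mem_coe] at hP
  obtain ⟨S, a, b, c, d, hab, hbc, hcd, hSk, ha, hb, hc, hd, h₁, h₂, h₃, h₄, h⟩ := hP
  refine ⟨a, b, c, d, hab, hbc, hcd, S, hSk, ha, hb, hc, hd, ?_⟩
  have hac := hab.trans hbc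
  have hbd := hbc.trans hcd
  have had := hab.trans hbd
  by_cases h₅ : insert a (insert c S) ∈ 𝓑
  · have := isFaceOf_crossing hk (S := S) (a := b) (b := c) (c := d) (d := a) hbc.ne hbd.ne hab.ne'
      hcd.ne hac.ne' had.ne' hSk hb hc hd ha h₃ (Finset.insert_comm a b S ▸ h₁) h₄
      (Finset.insert_comm a d S ▸ h₂) (fun h₆ => h ⟨h₅, h₆⟩)
    rw [Finset.insert_comm b a, Finset.insert_comm d a] at this
    convert this using 2
    ext T
    simp only [Finset.mem_insert, Finset.mem_singleton]
    tauto
  · exact isFaceOf_crossing hk hab.ne hac.ne had.ne hbc.ne hbd.ne hcd.ne hSk ha hb hc hd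
      h₁ h₂ h₃ h₄ h₅

end Faces

section Construction

variable {n k : ℕ}

/-- The span of the columns of `A` indexed by `X`. -/
def colSpan (A : Matrix (Fin k) (Fin n) ℝ) (X : Finset (Fin n)) : Submodule ℝ (Fin k → ℝ) :=
  Submodule.span ℝ (A.col '' ↑X)

theorem col_mem_colSpan (A : Matrix (Fin k) (Fin n) ℝ) {X : Finset (Fin n)} {p : Fin n}
    (hp : p ∈ X) : A.col p ∈ colSpan A X :=
  Submodule.subset_span ⟨p, hp, rfl⟩

theorem colSpan_le {A : Matrix (Fin k) (Fin n) ℝ} {X : Finset (Fin n)}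
    {V : Submodule ℝ (Fin k → ℝ)} : colSpan A X ≤ V ↔ ∀ p ∈ X, A.col p ∈ V := by
  simp [colSpan, Submodule.span_le, Set.subset_def]

theorem colSpan_mono (A : Matrix (Fin k) (Fin n) ℝ) {X Y : Finset (Fin n)} (h : X ⊆ Y) :
    colSpan A X ≤ colSpan A Y :=
  colSpan_le.2 fun _ hp => col_mem_colSpan A (h hp)

theorem exists_eq_smul_add_of_mem_colSpan_insert {A : Matrix (Fin k) (Fin n) ℝ}
    {X : Finset (Fin n)} {q : Fin n} {x : Fin k → ℝ} (h : x ∈ colSpan A (insert q X)) :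
    ∃ c : ℝ, ∃ u ∈ colSpan A X, x = c • A.col q + u := by
  rwa [colSpan, Finset.coe_insert, Set.image_insert_eq, Submodule.mem_span_insert] at h

theorem mem_colSpan_insert {A : Matrix (Fin k) (Fin n) ℝ} {X : Finset (Fin n)} {q : Fin n}
    {x : Fin k → ℝ} (hq : A.col q ∈ colSpan A X) (h : x ∈ colSpan A (insert q X)) :
    x ∈ colSpan A X := by
  obtain ⟨c, u, hu, rfl⟩ := exists_eq_smul_add_of_mem_colSpan_insert h
  exact add_mem (Submodule.smul_mem _ _ hq) hu

theorem mem_of_smul_add_mem {V : Submodule ℝ (Fin k → ℝ)} {c : ℝ} {x u : Fin k → ℝ} (hc : c ≠ 0)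
    (hu : u ∈ V) (h : c • x + u ∈ V) : x ∈ V :=
  (V.smul_mem_iff hc).1 ((V.add_mem_iff_left hu).1 h)

/-- The column `q` is a loop or a coloop of the matroid represented by `A`. -/
def IsFixed (A : Matrix (Fin k) (Fin n) ℝ) (q : Fin n) : Prop :=
  A.col q = 0 ∨ A.col q ∉ colSpan A {q}ᶜ

theorem IsFixed.col_mem_colSpan_of_insert {A : Matrix (Fin k) (Fin n) ℝ} {q a : Fin n}
    (hq : IsFixed A q) (ha : a ≠ q) {X : Finset (Fin n)} (h : A.col a ∈ colSpan A (insert q X)) :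
    A.col a ∈ colSpan A X := by
  by_cases hqX : q ∈ X
  · rwa [Finset.insert_eq_of_mem hqX] at h
  obtain ⟨c, u, hu, h⟩ := exists_eq_smul_add_of_mem_colSpan_insert h
  rcases hq with hq | hq
  · rw [h, hq, smul_zero, zero_add]
    exact hu
  · by_cases hc : c = 0
    · rw [h, hc, zero_smul, zero_add]
      exact hu
    · refine absurd (mem_of_smul_add_mem hc (colSpan_mono A ?_ hu) ?_) hq
      · intro x hx
        simp only [Finset.mem_compl, Finset.mem_singleton]
        rintro rfl
        exact hqX hx
      · rw [← h]
        exact col_mem_colSpan A (by simpa using ha)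

theorem col_mem_colSpan_of_union {A : Matrix (Fin k) (Fin n) ℝ} {D X : Finset (Fin n)} {a : Fin n}
    (hD : ∀ q ∈ D, IsFixed A q) (ha : a ∉ D) (h : A.col a ∈ colSpan A (D ∪ X)) :
    A.col a ∈ colSpan A X := by
  induction D using Finset.induction_on with
  | empty => rwa [Finset.empty_union] at h
  | insert q D _ ih =>
    rw [Finset.mem_insert, not_or] at ha
    rw [Finset.insert_union] at h
    exact ih (fun r hr => hD r (Finset.mem_insert_of_mem hr)) ha.2
      ((hD q (Finset.mem_insert_self _ _)).col_mem_colSpan_of_insert ha.1 h)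

theorem notMem_window {p : Fin n} {m : ℕ} (hm : m ≤ p + n) : p ∉ window n (p + 1) m := by
  rw [mem_window]
  rintro ⟨q, h1, h2, h3⟩
  rcases lt_or_ge q n with h | h
  · rw [Nat.mod_eq_of_lt h] at h3
    omega
  · rw [Nat.mod_eq_sub_mod h, Nat.mod_eq_of_lt (by omega)] at h3
    omega

theorem exists_matrix_of_fixed {f : Fin n → ℕ} (hf : ∀ p : Fin n, f p = p ∨ f p = p + n)
    (hk : (Finset.univ.filter fun p => n ≤ f p).card = k) :
    ∃ A : Matrix (Fin k) (Fin n) ℝ, (∀ I, 0 ≤ minor k n A I) ∧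
      HasType (fun p X => A.col p ∈ colSpan A X) f := by
  set C : Finset (Fin n) := Finset.univ.filter fun p => n ≤ f p with hC
  obtain ⟨A, hA⟩ : ∃ A : Matrix (Fin k) (Fin n) ℝ,
      ∀ r p, A r p = if C.orderEmbOfFin hk r = p then 1 else 0 := ⟨_, fun _ _ => rfl⟩
  have hcol : ∀ p ∉ C, A.col p = 0 := by
    intro p hp
    ext r
    have : C.orderEmbOfFin hk r ≠ p := fun h => hp (h ▸ Finset.orderEmbOfFin_mem C hk r)
    simp [hA, this]
  refine ⟨A, fun I => ?_, fun p m hpm hm => ?_⟩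
  · by_contra! hneg
    have hI := card_eq_of_minor_ne_zero hneg.ne
    have hind := (minor_ne_zero_iff hI).1 hneg.ne
    have hsub : I ⊆ C := fun p hp => by
      by_contra h
      exact hind.ne_zero (by exact_mod_cast hp) (hcol p h)
    have hIC : I = C := Finset.eq_of_subset_of_card_le hsub (by omega)
    have : A.submatrix id (I.orderEmbOfFin hI) = 1 := by
      subst hIC
      ext r s
      simp [hA, Matrix.one_apply]
    rw [minor_of_card hI, this, Matrix.det_one] at hneg
    linarith
  · have hp := p.isLt
    by_cases hpC : p ∈ C
    · have h1 : f p = p + n := (hf p).resolve_left fun h => by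
        simp [hC] at hpC
        omega
      refine iff_of_false (fun h => ?_) (by omega)
      obtain ⟨r, hr⟩ : p ∈ Set.range (C.orderEmbOfFin hk) := by
        rw [Finset.range_orderEmbOfFin]
        exact hpC
      have h2 : colSpan A (window n (p + 1) m) ≤ LinearMap.ker (LinearMap.proj r) := by
        refine colSpan_le.2 fun q hq => ?_
        have : p ≠ q := by
          rintro rfl
          exact notMem_window hm hq
        simp [hA, hr, this]
      have := h2 h
      simp [hA, hr] at this
    · have h1 : f p = p := (hf p).resolve_right fun h => by
        simp [hC] at hpC
        omega
      refine iff_of_true ?_ (by omega)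
      simp only [hcol p hpC]
      exact zero_mem _

theorem HasType.isFixed {A : Matrix (Fin k) (Fin n) ℝ} {f : Fin n → ℕ}
    (hA : HasType (fun p X => A.col p ∈ colSpan A X) f) {q : Fin n} (hq : f q = q ∨ f q = q + n) :
    IsFixed A q := by
  have hqn := q.isLt
  rcases hq with hq | hq
  · left
    have := (hA q (q + 1) (by omega) (by omega)).2 (by omega)
    rw [window_eq_empty le_rfl] at this
    simpa [colSpan] using this
  · right
    intro h
    have h1 : ({q}ᶜ : Finset (Fin n)) ⊆ window n (q + 1) (q + n) := by
      intro r hr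
      rw [mem_window_add (by omega) hqn.le]
      rw [Finset.mem_compl, Finset.mem_singleton, Fin.ext_iff] at hr
      omega
    have := (hA q (q + n) (by omega) le_rfl).1 (colSpan_mono A h1 h)
    omega

theorem minor_updateCol_add_nonneg {A : Matrix (Fin k) (Fin n) ℝ} (hA : ∀ I, 0 ≤ minor k n A I)
    {i j : Fin n} (hij : i < j) (hfix : ∀ q, i < q → q < j → IsFixed A q) (I : Finset (Fin n)) :
    0 ≤ minor k n (A.updateCol j (A.col j +
      (-1 : ℝ) ^ ((Finset.Ioo i j).filter (A.col · ≠ 0)).card • A.col i)) I := by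
  set τ : ℝ := (-1 : ℝ) ^ ((Finset.Ioo i j).filter (A.col · ≠ 0)).card with hτ
  set A' := A.updateCol j (A.col j + τ • A.col i) with hA'
  have hcol : ∀ q, q ≠ j → A'.col q = A.col q := fun q hq => by
    ext r
    simp [A', hq]
  by_cases hc : I.card = k
  swap
  · rw [minor, dif_neg hc]
  by_cases hj : j ∈ I
  swap
  · have h1 : A'.submatrix id (I.orderEmbOfFin hc) = A.submatrix id (I.orderEmbOfFin hc) := by
      ext r s
      have : I.orderEmbOfFin hc s ≠ j := fun h => hj (h ▸ Finset.orderEmbOfFin_mem I hc s)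
      exact congrFun (hcol _ this) r
    rw [minor_of_card hc, h1, ← minor_of_card hc]
    exact hA I
  obtain ⟨k, rfl⟩ : ∃ k', k = k' + 1 :=
    ⟨k - 1, by have := Finset.card_pos.2 ⟨j, hj⟩; omega⟩
  obtain ⟨R, hjR, rfl⟩ : ∃ R, j ∉ R ∧ insert j R = I :=
    ⟨I.erase j, by simp, Finset.insert_erase hj⟩
  have hR : R.card = k := by
    rw [Finset.card_insert_of_notMem hjR] at hc
    omega
  have hcof : cofactor A' R hR = cofactor A R hR := by
    ext1 v
    ext1
    simp only [LinearMap.comp_apply, cofactor_apply]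
    refine Finset.sum_congr rfl fun r _ => ?_
    congr 2
    ext s t
    have : R.orderEmbOfFin hR t ≠ j := fun h => hjR (h ▸ Finset.orderEmbOfFin_mem R hR t)
    exact congrFun (hcol _ this) _
  have hj' : A'.col j = A.col j + τ • A.col i := by
    ext r
    simp [A']
  have h2 := hA (insert j R)
  rw [minor_insert _ hR hjR] at h2
  rw [minor_insert _ hR hjR, hcof, hj', map_add, map_smul, smul_eq_mul, mul_add]
  refine add_nonneg h2 ?_
  by_cases hi : i ∈ R
  · rw [cofactor_col_of_mem A hR hi]
    simp
  have h3 := hA (insert i R)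
  by_cases h4 : minor (k + 1) n A (insert i R) = 0
  · rw [minor_insert _ hR hi, mul_eq_zero] at h4
    rw [h4.resolve_left (by simp)]
    simp
  have hci := card_eq_of_minor_ne_zero h4
  have hind := (minor_ne_zero_iff hci).1 h4
  have hsplit : R.filter (· < j) = R.filter (· < i) ∪ (Finset.Ioo i j).filter (A.col · ≠ 0) := by
    ext q
    simp only [Finset.mem_union, Finset.mem_filter, Finset.mem_Ioo]
    constructor
    · rintro ⟨hq, hqj⟩
      rcases lt_trichotomy q i with h | rfl | h
      · exact Or.inl ⟨hq, h⟩
      · exact absurd hq hi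
      · exact Or.inr ⟨⟨h, hqj⟩, hind.ne_zero (by simp [hq])⟩
    · rintro (⟨hq, hqi⟩ | ⟨⟨hiq, hqj⟩, hq⟩)
      · exact ⟨hq, hqi.trans hij⟩
      · refine ⟨?_, hqj⟩
        by_contra hqR
        refine ((hfix q hiq hqj).resolve_left hq) ?_
        have h5 := span_col_eq_top hci hind
        have h6 : insert i R ⊆ {q}ᶜ := by
          intro r hr
          simp only [Finset.mem_compl, Finset.mem_singleton]
          rintro rfl
          rcases Finset.mem_insert.1 hr with rfl | hr
          · exact lt_irrefl _ hiq
          · exact hqR hr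
        refine colSpan_mono A h6 ?_
        rw [colSpan, h5]
        trivial
  have hdisj : Disjoint (R.filter (· < i)) ((Finset.Ioo i j).filter (A.col · ≠ 0)) := by
    rw [Finset.disjoint_left]
    intro q hq hq'
    simp only [Finset.mem_filter, Finset.mem_Ioo] at hq hq'
    exact lt_asymm hq.2 hq'.1.1
  rw [minor_insert _ hR hi] at h3
  rw [hsplit, Finset.card_union_of_disjoint hdisj, pow_add, ← hτ]
  have hττ : τ * τ = 1 := by
    rw [hτ, ← mul_pow]
    simp
  calc 0 ≤ _ := h3
    _ = _ := by linear_combination (-(-1 : ℝ) ^ (R.filter (· < i)).card *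
        cofactor A R hR (A.col i)) * hττ

theorem HasType.updateCol {A : Matrix (Fin k) (Fin n) ℝ} {f : Fin n → ℕ} {i j : Fin n}
    (hij : i < j) (hfi : f i < n) (hfj : n ≤ f j) (hfji : f j ≤ i + n) (hjfi : j ≤ f i)
    (hfix : ∀ q, i < q → q < j → f q = q ∨ f q = q + n)
    (hA : HasType (fun p X => A.col p ∈ colSpan A X) (f ∘ Equiv.swap i j)) {τ : ℝ} (hτ : τ ≠ 0)
    {A' : Matrix (Fin k) (Fin n) ℝ} (hA' : ∀ q, q ≠ j → A'.col q = A.col q)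
    (hA'j : A'.col j = A.col j + τ • A.col i) :
    HasType (fun p X => A'.col p ∈ colSpan A' X) f := by
  have hj := j.isLt
  have hij' : i.val < j.val := hij
  have hfix' : ∀ q ∈ Finset.Ioo i j, IsFixed A q := by
    intro q hq
    rw [Finset.mem_Ioo] at hq
    refine hA.isFixed ?_
    rw [Function.comp_apply, Equiv.swap_apply_of_ne_of_ne hq.1.ne' hq.2.ne]
    exact hfix q hq.1 hq.2
  have hAi : ∀ m, i.val < m → m ≤ i + n →
      (A.col i ∈ colSpan A (window n (i + 1) m) ↔ f j < m) := fun m h1 h2 => by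
    simpa using hA i m h1 h2
  have hAj : ∀ m, j.val < m → m ≤ j + n →
      (A.col j ∈ colSpan A (window n (j + 1) m) ↔ f i < m) := fun m h1 h2 => by
    simpa using hA j m h1 h2
  have hspan : ∀ X : Finset (Fin n), (j ∈ X → i ∈ X) → colSpan A' X = colSpan A X := by
    intro X hX
    apply le_antisymm
    · refine colSpan_le.2 fun q hq => ?_
      by_cases hqj : q = j
      · subst hqj
        rw [hA'j]
        exact add_mem (col_mem_colSpan A hq) (Submodule.smul_mem _ _ (col_mem_colSpan A (hX hq)))
      · rw [hA' q hqj]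
        exact col_mem_colSpan A hq
    · refine colSpan_le.2 fun q hq => ?_
      by_cases hqj : q = j
      · subst hqj
        rw [← Submodule.add_mem_iff_left _ (Submodule.smul_mem _ τ
          (hA' i hij.ne ▸ col_mem_colSpan A' (hX hq))), ← hA'j]
        exact col_mem_colSpan A' hq
      · rw [← hA' q hqj]
        exact col_mem_colSpan A' hq
  have hunion : ∀ m, j.val < m →
      window n (i + 1) m = Finset.Ioo i j ∪ insert j (window n (j + 1) m) := by
    intro m hm
    ext x
    simp only [mem_window, Finset.mem_union, Finset.mem_Ioo, Finset.mem_insert, Fin.lt_def]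
    constructor
    · rintro ⟨q, h1, h2, h3⟩
      rcases lt_trichotomy q j with h | h | h
      · rw [Nat.mod_eq_of_lt (by omega)] at h3
        omega
      · rw [Nat.mod_eq_of_lt (by omega)] at h3
        exact Or.inr (Or.inl (Fin.ext (by omega)))
      · exact Or.inr (Or.inr ⟨q, h, h2, h3⟩)
    · rintro (⟨h1, h2⟩ | rfl | ⟨q, h1, h2, h3⟩)
      · exact ⟨x, h1, by omega, Nat.mod_eq_of_lt x.isLt⟩
      · exact ⟨x, hij', hm, Nat.mod_eq_of_lt x.isLt⟩
      · exact ⟨q, by omega, h2, h3⟩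
  have hjw : ∀ m, m ≤ j + n → j ∉ window n (j + 1) m := fun m hm => notMem_window hm
  intro p m hpm hmp
  simp only
  have hp := p.isLt
  by_cases hpi : p = i
  · subst hpi
    rw [hA' p hij.ne]
    rcases le_or_gt m j with hmj | hmj
    · have hjX : j ∉ window n (p + 1) m := by
        rw [mem_window_of_le (by omega)]
        omega
      rw [hspan _ (fun h => absurd h hjX), hAi m hpm hmp]
      omega
    have hX := hspan (window n (j + 1) m) fun h => absurd h (hjw m (by omega))
    have hDX := hspan (Finset.Ioo p j ∪ window n (j + 1) m) fun h => by
      simp [hjw m (by omega)] at h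
    rw [hunion m hmj, Finset.union_insert]
    have h1 := hAi m hpm hmp
    rw [hunion m hmj, Finset.union_insert] at h1
    have h2 := hAj m hmj (by omega)
    constructor
    · intro h
      obtain ⟨c, u, hu, h⟩ := exists_eq_smul_add_of_mem_colSpan_insert h
      rw [hDX] at hu
      rw [hA'j] at h
      by_cases hc : 1 - c * τ = 0
      · have hc0 : c ≠ 0 := by
          rintro rfl
          simp at hc
        rw [← h2]
        refine col_mem_colSpan_of_union hfix' (by simp) ?_
        refine mem_of_smul_add_mem hc0 hu ?_
        have : c • A.col j + u = (1 - c * τ) • A.col p := by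
          linear_combination (norm := module) (-1 : ℝ) • h
        rw [this, hc, zero_smul]
        exact zero_mem _
      · have := h1.1 ((Submodule.smul_mem_iff _ hc).1 ?_)
        · omega
        · have : (1 - c * τ) • A.col p = c • A.col j + u := by
            linear_combination (norm := module) (1 : ℝ) • h
          rw [this]
          exact add_mem (Submodule.smul_mem _ _ (col_mem_colSpan A (Finset.mem_insert_self _ _)))
            (colSpan_mono A (Finset.subset_insert _ _) hu)
    · intro h
      have h3 := hX ▸ h2.2 h
      have h4 : τ • A.col p ∈ colSpan A' (insert j (Finset.Ioo p j ∪ window n (j + 1) m)) := by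
        rw [← Submodule.add_mem_iff_right _ (colSpan_mono A' (Finset.subset_union_right.trans
          (Finset.subset_insert _ _)) h3), ← hA'j]
        exact col_mem_colSpan A' (Finset.mem_insert_self _ _)
      exact (Submodule.smul_mem_iff _ hτ).1 h4
  by_cases hpj : p = j
  · subst hpj
    rw [hA'j, hspan _ (fun h => absurd h (hjw m hmp))]
    have h2 := hAj m hpm hmp
    rcases le_or_gt m (i + n) with hmi | hmi
    · have h1 := hAi m (by omega) hmi
      rw [hunion m hpm, Finset.union_insert] at h1
      constructor
      · intro h
        rw [← h1]
        have h3 : τ • A.col i ∈ colSpan A (insert p (Finset.Ioo i p ∪ window n (p + 1) m)) := by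
          rw [← Submodule.add_mem_iff_right _ (col_mem_colSpan A (Finset.mem_insert_self p _))]
          exact colSpan_mono A (Finset.subset_union_right.trans (Finset.subset_insert _ _)) h
        exact (Submodule.smul_mem_iff _ hτ).1 h3
      · intro h
        have h3 := h2.2 (by omega)
        exact add_mem h3 (Submodule.smul_mem _ _ (col_mem_colSpan_of_union hfix' (by simp)
          (mem_colSpan_insert (colSpan_mono A Finset.subset_union_right h3) (h1.2 h))))
    · refine iff_of_true ?_ (by omega)
      refine add_mem (h2.2 (by omega)) (Submodule.smul_mem _ _ (col_mem_colSpan A ?_))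
      obtain ⟨m, rfl⟩ : ∃ m', m = m' + n := ⟨m - n, by omega⟩
      rw [mem_window_add (by omega) (by omega)]
      omega
  rw [hA' p hpj]
  have h0 := hA p m hpm hmp
  simp only [Function.comp_apply, Equiv.swap_apply_of_ne_of_ne hpi hpj] at h0
  by_cases hD : i < p ∧ p < j
  · rcases hfix p hD.1 hD.2 with h | h
    · refine iff_of_true ?_ (by omega)
      have := (hA p (p + 1) (by omega) (by omega)).2 (by
        rw [Function.comp_apply, Equiv.swap_apply_of_ne_of_ne hpi hpj]
        omega)
      rw [window_eq_empty le_rfl] at this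
      have h3 := hspan ∅ (by simp)
      exact colSpan_mono A' (Finset.empty_subset _) (h3 ▸ this)
    · refine iff_of_false (fun h1 => ?_) (by omega)
      have h2 := hspan {p}ᶜ fun _ => by simpa using Ne.symm hpi
      have h3 : window n (p + 1) m ⊆ {p}ᶜ := fun q hq => by
        simp only [Finset.mem_compl, Finset.mem_singleton]
        rintro rfl
        exact notMem_window hmp hq
      have h4 : ({p}ᶜ : Finset (Fin n)) ⊆ window n (p + 1) (p + n) := by
        intro r hr
        rw [mem_window_add (by omega) hp.le]
        rw [Finset.mem_compl, Finset.mem_singleton, Fin.ext_iff] at hr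
        omega
      have h5 := (hA p (p + n) (by omega) le_rfl).1
        (colSpan_mono A h4 (h2 ▸ colSpan_mono A' h3 h1))
      rw [Function.comp_apply, Equiv.swap_apply_of_ne_of_ne hpi hpj] at h5
      omega
  · rw [hspan _ ?_, h0]
    rcases le_or_gt m n with hmn | hmn
    · rw [mem_window_of_le hmn, mem_window_of_le hmn]
      omega
    · obtain ⟨m, rfl⟩ : ∃ m', m = m' + n := ⟨m - n, by omega⟩
      rw [mem_window_add (by omega) (by omega), mem_window_add (by omega) (by omega)]
      omega

end Construction

section Existence

variable {n k : ℕ}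

theorem IsBoundedAffine.exists_pair {f : Fin n → ℕ} (hf : IsBoundedAffine f)
    (h : ¬ ∀ p : Fin n, f p = p ∨ f p = p + n) :
    ∃ i j : Fin n, i < j ∧ f i < n ∧ n ≤ f j ∧ f j ≤ i + n ∧ j ≤ f i ∧
      ∀ q, i < q → q < j → f q = q ∨ f q = q + n := by
  classical
  set U : Finset (Fin n) := Finset.univ.filter fun p => ¬ (f p = p ∨ f p = p + n) with hU
  have hmem : ∀ p, p ∈ U ↔ ¬ (f p = p ∨ f p = p + n) := by simp [hU]
  have hmod : ∀ p q : Fin n, p ∈ U → q ∉ U → f p ≠ q ∧ f p ≠ q + n := by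
    intro p q hp hq
    have hqn := q.isLt
    have hne : f p % n ≠ f q % n := fun h => hq (hf.injective_mod p q h ▸ hp)
    rw [hmem, not_not] at hq
    rcases hq with h | h <;> rw [h] at hne <;> constructor <;> intro h' <;> rw [h'] at hne <;>
      simp at hne
  have hU0 : U.Nonempty := by
    rw [not_forall] at h
    obtain ⟨p, hp⟩ := h
    exact ⟨p, (hmem p).2 hp⟩
  have hlt : ∀ p ∈ U, p.val < f p := fun p hp => by
    have := hf.le_apply p
    rw [hmem] at hp
    omega
  have hlt' : ∀ p ∈ U, f p < p + n := fun p hp => by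
    have := hf.apply_le p
    rw [hmem] at hp
    omega
  have hmin : f (U.min' hU0) < n := by
    by_contra! hge
    have h1 := hlt' _ (U.min'_mem hU0)
    have h2 := (U.min' hU0).isLt
    let q : Fin n := ⟨f (U.min' hU0) - n, by omega⟩
    refine (hmod _ q (U.min'_mem hU0) fun hq => ?_).2 (by simp only [q]; omega)
    have := Fin.le_def.1 (U.min'_le q hq)
    simp only [q] at this
    omega
  have hmax : n ≤ f (U.max' hU0) := by
    by_contra! hge
    have h1 := hlt _ (U.max'_mem hU0)
    let q : Fin n := ⟨f (U.max' hU0), hge⟩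
    refine (hmod _ q (U.max'_mem hU0) fun hq => ?_).1 rfl
    have := Fin.le_def.1 (U.le_max' q hq)
    simp only [q] at this
    omega
  let P : Finset (Fin n × Fin n) := (U ×ˢ U).filter fun x => x.1 < x.2 ∧ f x.1 < n ∧ n ≤ f x.2
  have hP : P.Nonempty := by
    refine ⟨(U.min' hU0, U.max' hU0), ?_⟩
    simp only [P, Finset.mem_filter, Finset.mem_product]
    refine ⟨⟨U.min'_mem _, U.max'_mem _⟩, lt_of_le_of_ne (U.min'_le _ (U.max'_mem _)) ?_, hmin, hmax⟩
    intro h'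
    rw [h'] at hmin
    omega
  obtain ⟨⟨i, j⟩, hij, hbest⟩ := P.exists_min_image (fun x => x.2.val - x.1.val) hP
  simp only [P, Finset.mem_filter, Finset.mem_product, Prod.forall, Fin.lt_def] at hij hbest
  obtain ⟨⟨hi, hj⟩, hlt₂, hfi, hfj⟩ := hij
  have hbetween : ∀ q, i < q → q < j → q ∉ U := by
    intro q h1 h2 hq
    rw [Fin.lt_def] at h1 h2
    rcases lt_or_ge (f q) n with h3 | h3
    · have := hbest q j ⟨⟨hq, hj⟩, h2, h3, hfj⟩
      omega
    · have := hbest i q ⟨⟨hi, hq⟩, h1, hfi, h3⟩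
      omega
  refine ⟨i, j, hlt₂, hfi, hfj, ?_, ?_, fun q h1 h2 => by
    simpa only [hmem, not_not] using hbetween q h1 h2⟩
  · by_contra! hgt
    have h1 := hlt' j hj
    have h2 := j.isLt
    exact (hmod j ⟨f j - n, by omega⟩ hj (hbetween _ (by rw [Fin.lt_def]; simp only; omega)
      (by rw [Fin.lt_def]; simp only; omega))).2 (by simp only; omega)
  · by_contra! hgt
    exact (hmod i ⟨f i, hfi⟩ hi (hbetween _ (hlt i hi) hgt)).1 rfl

theorem IsBoundedAffine.comp_swap {f : Fin n → ℕ} (hf : IsBoundedAffine f) {i j : Fin n}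
    (hij : i < j) (hfi : f i < n) (hfj : n ≤ f j) (hfji : f j ≤ i + n) (hjfi : j ≤ f i) :
    IsBoundedAffine (f ∘ Equiv.swap i j) where
  le_apply p := by
    have := hf.le_apply p
    have := i.isLt
    rw [Function.comp_apply, Equiv.swap_apply_def]
    split_ifs with h1 h2 <;> subst_vars <;> omega
  apply_le p := by
    have := hf.apply_le p
    rw [Function.comp_apply, Equiv.swap_apply_def]
    split_ifs with h1 h2 <;> subst_vars <;> omega
  injective_mod p q h := (Equiv.swap i j).injective (hf.injective_mod _ _ h)

theorem sum_mul_comp_swap_lt {f : Fin n → ℕ} {i j : Fin n} (hij : i < j) (hf : f i < f j) :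
    ∑ p : Fin n, (p : ℕ) * (f ∘ Equiv.swap i j) p < ∑ p : Fin n, (p : ℕ) * f p := by
  have hne : j ∈ Finset.univ.erase i := by simp [hij.ne']
  rw [← Finset.add_sum_erase _ _ (Finset.mem_univ i), ← Finset.add_sum_erase _ _ hne,
    ← Finset.add_sum_erase _ (fun p : Fin n => (p : ℕ) * f p) (Finset.mem_univ i),
    ← Finset.add_sum_erase _ (fun p : Fin n => (p : ℕ) * f p) hne]
  have h1 : ∑ p ∈ (Finset.univ.erase i).erase j, (p : ℕ) * (f ∘ Equiv.swap i j) p =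
      ∑ p ∈ (Finset.univ.erase i).erase j, (p : ℕ) * f p := by
    refine Finset.sum_congr rfl fun p hp => ?_
    simp only [Finset.mem_erase, Finset.mem_univ, and_true] at hp
    rw [Function.comp_apply, Equiv.swap_apply_of_ne_of_ne hp.2 hp.1]
  rw [h1, Function.comp_apply, Function.comp_apply, Equiv.swap_apply_left, Equiv.swap_apply_right]
  have h2 : (i : ℕ) < j := hij
  nlinarith

theorem exists_matrix_of_isBoundedAffine {f : Fin n → ℕ} (hf : IsBoundedAffine f)
    (hk : (Finset.univ.filter fun p => n ≤ f p).card = k) :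
    ∃ A : Matrix (Fin k) (Fin n) ℝ, (∀ I, 0 ≤ minor k n A I) ∧
      HasType (fun p X => A.col p ∈ colSpan A X) f := by
  induction hN : ∑ p : Fin n, (p : ℕ) * f p using Nat.strong_induction_on generalizing f with
  | _ N ih =>
    by_cases hfix : ∀ p : Fin n, f p = p ∨ f p = p + n
    · exact exists_matrix_of_fixed hfix hk
    obtain ⟨i, j, hij, hfi, hfj, hfji, hjfi, hbetween⟩ := hf.exists_pair hfix
    obtain ⟨A, hA, hAt⟩ := ih _ (hN ▸ sum_mul_comp_swap_lt hij (by omega))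
      (hf.comp_swap hij hfi hfj hfji hjfi) (by
        rw [← hk]
        refine Finset.card_equiv (Equiv.swap i j) fun p => ?_
        simp) rfl
    refine ⟨_, minor_updateCol_add_nonneg hA hij fun q h1 h2 => hAt.isFixed ?_,
      hAt.updateCol hij hfi hfj hfji hjfi hbetween
        (pow_ne_zero ((Finset.Ioo i j).filter (A.col · ≠ 0)).card (neg_ne_zero.2 one_ne_zero))
        (fun q hq => ?_) ?_⟩
    · rw [Function.comp_apply, Equiv.swap_apply_of_ne_of_ne h1.ne' h2.ne]
      exact hbetween q h1 h2
    · ext r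
      simp [hq]
    · ext r
      simp

end Existence

section Characterization

variable {n k : ℕ}

theorem subset_of_rank_window_le {𝓑 𝓒 : Finset (Finset (Fin n))} (h0 : 𝓑.Nonempty)
    (hk : ∀ B ∈ 𝓑, B.card = k) (hex : ExchangeAxiom n 𝓑)
    (hP : CrossingClosed k (𝓑 : Set (Finset (Fin n)))) (hk' : ∀ B ∈ 𝓒, B.card = k)
    {rk rk' : Finset (Fin n) → ℕ} (hrk : ∀ F, ∃ T ∈ 𝓑, rk F ≤ (T ∩ F).card)
    (hrk' : ∀ F, ∀ T ∈ 𝓒, (T ∩ F).card ≤ rk' F)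
    (h : ∀ l m, l ≤ m → m ≤ l + n → rk' (window n l m) ≤ rk (window n l m)) : 𝓒 ⊆ 𝓑 := by
  intro B hB
  by_contra hB'
  obtain ⟨F, hF, hF'⟩ := exists_violates_card_boundary_le h0 hk hex hP (hk' B hB) hB'
  obtain ⟨l, m, hlm, hm, rfl⟩ := exists_eq_window hF'
  obtain ⟨T, hT, hT'⟩ := hrk (window n l m)
  have h1 := hF T hT
  have h2 := hrk' (window n l m) B hB
  have h3 := h l m hlm hm
  omega

theorem finrank_colSpan_of_linearIndepOn {A : Matrix (Fin k) (Fin n) ℝ} {J : Finset (Fin n)}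
    (hJ : LinearIndepOn ℝ A.col (J : Set (Fin n))) :
    Module.finrank ℝ (colSpan A J) = J.card := by
  have := finrank_span_eq_card hJ
  simp only [Finset.coe_sort_coe, Fintype.card_coe] at this
  rw [← this, colSpan, Set.image_eq_range]
  rfl

theorem exists_linearIndepOn_superset (A : Matrix (Fin k) (Fin n) ℝ) {I F : Finset (Fin n)}
    (hI : LinearIndepOn ℝ A.col (I : Set (Fin n))) (hIF : I ⊆ F) :
    ∃ J, I ⊆ J ∧ J ⊆ F ∧ LinearIndepOn ℝ A.col (J : Set (Fin n)) ∧
      Module.finrank ℝ (colSpan A F) = J.card := by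
  classical
  obtain ⟨J, hJF, hIJ, hsp, hJ⟩ := exists_linearIndepOn_extension hI (Finset.coe_subset.2 hIF)
  lift J to Finset (Fin n) using J.toFinite
  rw [Finset.coe_subset] at hJF hIJ
  refine ⟨J, hIJ, hJF, hJ, ?_⟩
  have h : colSpan A F = colSpan A J := le_antisymm (Submodule.span_le.2 hsp) (colSpan_mono A hJF)
  rw [h, finrank_colSpan_of_linearIndepOn hJ]

theorem exists_card_inter_eq_finrank {A : Matrix (Fin k) (Fin n) ℝ}
    (hA : Module.finrank ℝ (colSpan A Finset.univ) = k) (F : Finset (Fin n)) :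
    ∃ T, minor k n A T ≠ 0 ∧ Module.finrank ℝ (colSpan A F) ≤ (T ∩ F).card := by
  obtain ⟨J, -, hJF, hJ, hJc⟩ := exists_linearIndepOn_superset A (I := ∅) (F := F)
    (by simp) (Finset.empty_subset _)
  obtain ⟨T, hJT, -, hT, hTc⟩ := exists_linearIndepOn_superset A hJ (Finset.subset_univ J)
  refine ⟨T, (minor_ne_zero_iff (by omega)).2 hT, ?_⟩
  rw [hJc]
  exact Finset.card_le_card (Finset.subset_inter hJT hJF)

theorem card_inter_le_finrank {A : Matrix (Fin k) (Fin n) ℝ} {T : Finset (Fin n)}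
    (hT : minor k n A T ≠ 0) (F : Finset (Fin n)) :
    (T ∩ F).card ≤ Module.finrank ℝ (colSpan A F) := by
  have h1 := ((minor_ne_zero_iff (card_eq_of_minor_ne_zero hT)).1 hT).mono
    (Finset.coe_subset.2 (Finset.inter_subset_left (s₂ := F)))
  rw [← finrank_colSpan_of_linearIndepOn h1]
  exact Submodule.finrank_mono (colSpan_mono A Finset.inter_subset_right)

theorem finrank_colSpan_insert_of_mem {A : Matrix (Fin k) (Fin n) ℝ} {p : Fin n}
    {X : Finset (Fin n)} (h : A.col p ∈ colSpan A X) :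
    Module.finrank ℝ (colSpan A (insert p X)) = Module.finrank ℝ (colSpan A X) := by
  have h' : colSpan A (insert p X) = colSpan A X :=
    le_antisymm (fun _ hx => mem_colSpan_insert h hx) (colSpan_mono A (Finset.subset_insert _ _))
  rw [h']

theorem finrank_colSpan_insert_of_notMem {A : Matrix (Fin k) (Fin n) ℝ} {p : Fin n}
    {X : Finset (Fin n)} (h : A.col p ∉ colSpan A X) :
    Module.finrank ℝ (colSpan A (insert p X)) = Module.finrank ℝ (colSpan A X) + 1 := by
  have h' : colSpan A (insert p X) = colSpan A X ⊔ Submodule.span ℝ {A.col p} := by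
    rw [colSpan, colSpan, Finset.coe_insert, Set.image_insert_eq, Submodule.span_insert, sup_comm]
  rw [h', Submodule.finrank_sup_span_singleton h]

theorem CrossingClosed.isPositroid {𝓑 : Finset (Finset (Fin n))} (h0 : 𝓑.Nonempty)
    (hk : ∀ B ∈ 𝓑, B.card = k) (hex : ExchangeAxiom n 𝓑)
    (hP : CrossingClosed k (𝓑 : Set (Finset (Fin n)))) : IsPositroid n k 𝓑 := by
  classical
  obtain ⟨M, hE, hM⟩ := exists_matroid_of_exchangeAxiom h0 hex
  obtain ⟨f, hf, hft⟩ := M.exists_hasType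
  let rk : Finset (Fin n) → ℕ := fun X => (M.eRk ↑X).toNat
  have hfin : ∀ X : Set (Fin n), M.eRk X ≠ ⊤ := fun X =>
    ((M.eRk_le_encard X).trans_lt (Set.encard_lt_top_iff.2 X.toFinite)).ne
  have hrk0 : rk ∅ = 0 := by simp [rk]
  have hrk : ∀ p (X : Finset (Fin n)), p ∈ M.closure ↑X → rk (insert p X) = rk X := by
    intro p X h
    simp only [rk, Finset.coe_insert]
    rw [← M.eRk_closure_eq (insert p _), M.closure_insert_eq_of_mem_closure h, M.eRk_closure_eq]
  have hrk₁ : ∀ p (X : Finset (Fin n)), ¬ p ∈ M.closure ↑X → rk (insert p X) = rk X + 1 := by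
    intro p X h
    simp only [rk, Finset.coe_insert]
    rw [M.eRk_insert_eq_add_one ⟨by simp [hE], h⟩, ENat.toNat_add (hfin _) (by simp)]
    simp
  have hle : ∀ F, ∀ T ∈ 𝓑, (T ∩ F).card ≤ rk F := by
    intro F T hT
    have h1 := (((hM T).2 hT).indep.subset (show ((T ∩ F : Finset (Fin n)) : Set (Fin n)) ⊆ T by
      simp)).encard_le_eRk_of_subset (X := (F : Set (Fin n))) (by simp)
    rw [Set.encard_coe_eq_coe_finsetCard] at h1
    simpa using ENat.toNat_le_toNat h1 (hfin _)
  have hge : ∀ F, ∃ T ∈ 𝓑, rk F ≤ (T ∩ F).card := by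
    intro F
    obtain ⟨T, hT, hmax⟩ := 𝓑.exists_max_image (fun T => (T ∩ F).card) h0
    have h1 := (Saturates.isBasis hE hM hT hmax).encard_eq_eRk
    rw [Set.encard_coe_eq_coe_finsetCard] at h1
    exact ⟨T, hT, by simp [rk, ← h1]⟩
  have hku : rk Finset.univ = k := by
    obtain ⟨T, hT, h1⟩ := hge Finset.univ
    have h2 := hle Finset.univ T hT
    rw [Finset.inter_univ, hk T hT] at h1 h2
    omega
  obtain ⟨A, hA, hAt⟩ := exists_matrix_of_isBoundedAffine hf
    ((rank_univ_eq_of_hasType hft hrk0 hrk hrk₁).symm.trans hku)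
  have hrk0' : Module.finrank ℝ (colSpan A ∅) = 0 := by
    rw [colSpan, Finset.coe_empty, Set.image_empty, Submodule.span_empty, finrank_bot]
  have hAu : Module.finrank ℝ (colSpan A Finset.univ) = k := by
    rw [rank_univ_eq_of_hasType (rk := fun X => Module.finrank ℝ (colSpan A X)) hAt hrk0'
      (fun p X => finrank_colSpan_insert_of_mem) (fun p X => finrank_colSpan_insert_of_notMem),
      ← rank_univ_eq_of_hasType hft hrk0 hrk hrk₁, hku]
  have heq : ∀ l m, l ≤ m → m ≤ l + n →
      rk (window n l m) = Module.finrank ℝ (colSpan A (window n l m)) := fun l m hlm hm =>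
    rank_window_eq_of_hasType (rk' := fun X => Module.finrank ℝ (colSpan A X)) hft hAt
      (hrk0.trans hrk0'.symm) hrk hrk₁ (fun p X => finrank_colSpan_insert_of_mem)
      (fun p X => finrank_colSpan_insert_of_notMem) hlm hm
  set 𝓒 : Finset (Finset (Fin n)) := Finset.univ.filter fun I => minor k n A I ≠ 0 with h𝓒
  have hmem : ∀ I, I ∈ 𝓒 ↔ minor k n A I ≠ 0 := by simp [h𝓒]
  have hrank : A.rank = k := by
    refine Eq.trans ?_ hAu
    rw [Matrix.rank_eq_finrank_span_cols, colSpan, Finset.coe_univ, Set.image_univ]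
  have hpos : IsPositroid n k 𝓒 := ⟨A, hrank, hA, fun I _ => hmem I⟩
  have hkc : ∀ I ∈ 𝓒, I.card = k := fun I hI => card_eq_of_minor_ne_zero ((hmem I).1 hI)
  have hgec : ∀ F, ∃ T ∈ 𝓒, Module.finrank ℝ (colSpan A F) ≤ (T ∩ F).card := fun F => by
    simpa only [hmem] using exists_card_inter_eq_finrank hAu F
  have h𝓑𝓒 : 𝓑 = 𝓒 := by
    apply Finset.Subset.antisymm
    · refine subset_of_rank_window_le (let ⟨T, hT, _⟩ := hgec ∅; ⟨T, hT⟩) hkc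
        (exchangeAxiom_minors A hmem) hpos.crossingClosed hk hgec hle
        fun l m hlm hm => (heq l m hlm hm).le
    · exact subset_of_rank_window_le h0 hk hex hP hkc hge
        (fun F T hT => card_inter_le_finrank ((hmem T).1 hT) F)
        fun l m hlm hm => (heq l m hlm hm).ge
  rw [h𝓑𝓒]
  exact hpos

end Characterization

/-- **Characterization of positroid polytopes.** A matroid `M` of rank `k` on
`[n]` is a positroid iff every two-dimensional face of its matroid polytope
`Γ_M` is a positroid polytope.  Moreover, if `M` is not a positroid, then `Γ_M`
has a two-dimensional face with vertex set
`{e_{Sab}, e_{Sad}, e_{Sbc}, e_{Scd}}` for some `a < b < c < d` and a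
`(k−2)`-set `S` disjoint from `{a,b,c,d}`. -/
theorem positroid_two_dim_face_characterization (n k : ℕ)
    (𝓑 : Finset (Finset (Fin n))) (h0 : 𝓑.Nonempty) (hk : ∀ B ∈ 𝓑, B.card = k)
    (hex : ExchangeAxiom n 𝓑) :
    (IsPositroid n k ↑𝓑 ↔
      ∀ F : Set (Fin n → ℝ), IsFaceOf n (polytopeOf n 𝓑) F →
        Module.finrank ℝ (affineSpan ℝ F).direction = 2 →
        ∃ 𝓑' : Finset (Finset (Fin n)), IsPositroid n k ↑𝓑' ∧ F = polytopeOf n 𝓑') ∧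
    (¬ IsPositroid n k ↑𝓑 →
      ∃ a b c d : Fin n, a < b ∧ b < c ∧ c < d ∧
        ∃ S : Finset (Fin n), S.card + 2 = k ∧
          a ∉ S ∧ b ∉ S ∧ c ∉ S ∧ d ∉ S ∧
          IsFaceOf n (polytopeOf n 𝓑)
            (convexHull ℝ {ind n (insert a (insert b S)), ind n (insert a (insert d S)),
              ind n (insert b (insert c S)), ind n (insert c (insert d S))}) ∧
          Module.finrank ℝ (affineSpan ℝ
            (convexHull ℝ {ind n (insert a (insert b S)), ind n (insert a (insert d S)),
              ind n (insert b (insert c S)), ind n (insert c (insert d S))} :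
                Set (Fin n → ℝ))).direction = 2) := by
  have hex_face : ¬ IsPositroid n k ↑𝓑 →
      ∃ a b c d : Fin n, a < b ∧ b < c ∧ c < d ∧
        ∃ S : Finset (Fin n), S.card + 2 = k ∧ a ∉ S ∧ b ∉ S ∧ c ∉ S ∧ d ∉ S ∧
          IsFaceOf n (polytopeOf n 𝓑) (polytopeOf n {insert a (insert b S), insert a (insert d S),
            insert b (insert c S), insert c (insert d S)}) :=
    fun h => exists_crossing_face hk fun hP => h (hP.isPositroid h0 hk hex)
  refine ⟨⟨?_, fun h => ?_⟩, fun h => ?_⟩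
  · rintro h F ⟨w, rfl⟩ -
    refine ⟨maximizers 𝓑 w, ?_, face_eq_polytopeOf_maximizers h0 w⟩
    exact (h.crossingClosed.maximizers w).isPositroid (maximizers_nonempty h0 w)
      (fun B hB => hk B (mem_maximizers.1 hB).1) (exchangeAxiom_maximizers hex w)
  · by_contra hnot
    obtain ⟨a, b, c, d, hab, hbc, hcd, S, hS, ha, hb, hc, hd, hF⟩ := hex_face hnot
    have hac := hab.trans hbc
    have hbd := hbc.trans hcd
    have had := hab.trans hbd
    obtain ⟨𝓑', h𝓑', heq⟩ := h _ hF (by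
      rw [image_ind_crossing]
      exact finrank_direction_crossing hab.ne hac.ne had.ne hbc.ne hbd.ne hcd.ne ha hb hc hd)
    have hmem : ∀ T, T ∈ 𝓑' ↔ T = insert a (insert b S) ∨ T = insert a (insert d S) ∨
        T = insert b (insert c S) ∨ T = insert c (insert d S) := fun T => by
      rw [← ind_mem_polytopeOf_iff, ← heq, ind_mem_polytopeOf_iff]
      simp
    have h1 := (h𝓑'.crossingClosed S a b c d hab hbc hcd hS ha hb hc hd (by simp [hmem])
      (by simp [hmem]) (by simp [hmem]) (by simp [hmem])).1
    rw [Finset.mem_coe, hmem] at h1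
    have hne : ∀ x y : Fin n, (insert a (insert c S) = insert x (insert y S)) →
        (a = x ∨ a = y) ∧ (c = x ∨ c = y) := fun x y h2 => by
      have h3 : a ∈ insert x (insert y S) := by simp [← h2]
      have h4 : c ∈ insert x (insert y S) := by simp [← h2]
      simpa [ha, hc] using And.intro h3 h4
    rcases h1 with h1 | h1 | h1 | h1 <;> have := hne _ _ h1 <;> omega
  · obtain ⟨a, b, c, d, hab, hbc, hcd, S, hS, ha, hb, hc, hd, hF⟩ := hex_face h
    have hac := hab.trans hbc
    have hbd := hbc.trans hcd
    have had := hab.trans hbd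
    refine ⟨a, b, c, d, hab, hbc, hcd, S, hS, ha, hb, hc, hd, image_ind_crossing ▸ hF, ?_⟩
    exact finrank_direction_crossing hab.ne hac.ne had.ne hbc.ne hbd.ne hcd.ne ha hb hc hd
end
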